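/- arXiv:1211.6080 — 7 statements merged into one kernel-verified Lean document; each statement's English description precedes it below -/
import Mathlib

section
/- Let X be a real Hilbert space with dim X ≥ 2, and let t₁, t₀, λ₋, λ₊, M₂, r ∈ ℝ with λ₋ < λ₊ and M₂ > 0. Define M₁ = 2λ₊ − λ₋ if t₁ ≥ t₀ and M₁ = λ₊ − 2λ₋ otherwise, and K(α) = |t₁−t₀| if α = 0, K(α) = (exp(α|t₁−t₀|)−1)/α otherwise. If r·M₂·K(M₁) > 1, then there exists an autonomous ODE ẋ = f(x) with analytic right hand side f defined on all of X such that λ₋ ≤ μ₋(f'(x)) ≤ μ₊(f'(x)) ≤ λ₊ and ‖f''(x)‖ ≤ M₂ for all x ∈ X, and yet the reachable set φ(t₁,t₀,B̄(0,r)) is not convex (φ being the general solution). In other words, the bound r·M₂·K(M₁) ≤ 1 ensuring convexity of reachable sets is sharp. -/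
open Metric RealInnerProductSpace

/-- `μ₋(A) = inf {⟨Ax,x⟩ : ‖x‖ = 1}`. -/
noncomputable def muMinus {X : Type*} [NormedAddCommGroup X] [InnerProductSpace ℝ X]
    (A : X →L[ℝ] X) : ℝ :=
  sInf {c : ℝ | ∃ y : X, ‖y‖ = 1 ∧ c = ⟪A y, y⟫}

/-- `μ₊(A) = sup {⟨Ax,x⟩ : ‖x‖ = 1}`. -/
noncomputable def muPlus {X : Type*} [NormedAddCommGroup X] [InnerProductSpace ℝ X]
    (A : X →L[ℝ] X) : ℝ :=
  sSup {c : ℝ | ∃ y : X, ‖y‖ = 1 ∧ c = ⟪A y, y⟫}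

open Filter Topology in
lemma aux_key (T a d M ω r : ℝ) (hT : 0 < T) (hω : 0 < ω) (hM : 0 < M) (hr : 0 < r)
    (hc : 1 < r * M * ∫ s in (0:ℝ)..T, Real.exp ((2 * a - d) * s)) :
    ∃ δ : ℝ, 0 < δ ∧ δ ≤ r ∧ r < √(r ^ 2 - δ ^ 2) + ∫ s in (0:ℝ)..T,
      Real.exp (-d * s) * (M / ω ^ 2 * (1 - Real.cos (ω * (Real.exp (a * s) * δ)))) := by
  set c := ∫ s in (0:ℝ)..T, Real.exp ((2 * a - d) * s) with hcdef
  obtain ⟨η, hη1, hη2⟩ : ∃ η : ℝ, 1 / (r * M * c) < η ∧ η < 1 :=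
    exists_between (by rw [div_lt_one (by linarith)]; exact hc)
  have hη : 1 < η * (r * M * c) := by rwa [div_lt_iff₀ (by linarith)] at hη1
  set k := η * M * c / 2 with hk
  have hk1 : 0 < 2 * r * k - 1 := by rw [hk]; linarith
  set B := ω * Real.exp (|a| * T) with hB
  have hBpos : 0 < B := by positivity
  have e1 : ∀ᶠ δ : ℝ in 𝓝[>] 0, k ^ 2 * δ ^ 2 < 2 * r * k - 1 := by
    refine eventually_nhdsWithin_of_eventually_nhds ?_
    have : ContinuousAt (fun δ : ℝ => k ^ 2 * δ ^ 2) 0 := by fun_prop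
    exact this.eventually_lt continuousAt_const (by simpa using hk1)
  have e2 : ∀ᶠ δ : ℝ in 𝓝[>] 0, (B * δ) ^ 2 < 1 - η := by
    refine eventually_nhdsWithin_of_eventually_nhds ?_
    have : ContinuousAt (fun δ : ℝ => (B * δ) ^ 2) 0 := by fun_prop
    exact this.eventually_lt continuousAt_const (by simpa using hη2)
  have e3 : ∀ᶠ δ : ℝ in 𝓝[>] 0, δ < r :=
    eventually_nhdsWithin_of_eventually_nhds (eventually_lt_nhds hr)
  have e4 : ∀ᶠ δ : ℝ in 𝓝[>] 0, 0 < δ := eventually_mem_nhdsWithin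
  obtain ⟨δ, ⟨h1, h2⟩, h3, h4⟩ := ((e1.and e2).and (e3.and e4)).exists
  refine ⟨δ, h4, h3.le, ?_⟩
  have hηpos : 0 < η := lt_trans (by positivity) hη1
  have hsqrt : r - k * δ ^ 2 < √(r ^ 2 - δ ^ 2) := by
    apply Real.lt_sqrt_of_sq_lt
    have : 0 < δ ^ 2 := by positivity
    nlinarith
  have hint : k * δ ^ 2 ≤ ∫ s in (0:ℝ)..T,
      Real.exp (-d * s) * (M / ω ^ 2 * (1 - Real.cos (ω * (Real.exp (a * s) * δ)))) := by
    have : k * δ ^ 2 = ∫ s in (0:ℝ)..T, (η * M / 2 * δ ^ 2) * Real.exp ((2 * a - d) * s) := by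
      rw [intervalIntegral.integral_const_mul, ← hcdef, hk]; ring
    rw [this]
    apply intervalIntegral.integral_mono_on hT.le
    · apply Continuous.intervalIntegrable; fun_prop
    · apply Continuous.intervalIntegrable; fun_prop
    intro s hs
    set y := ω * (Real.exp (a * s) * δ) with hy
    have hy0 : 0 < y := by positivity
    have hyB : y ≤ B * δ := by
      have : Real.exp (a * s) ≤ Real.exp (|a| * T) := by
        apply Real.exp_le_exp.2
        calc a * s ≤ |a| * s := mul_le_mul_of_nonneg_right (le_abs_self a) hs.1
          _ ≤ |a| * T := mul_le_mul_of_nonneg_left hs.2 (abs_nonneg a)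
      rw [hy, hB, mul_assoc]
      gcongr
    have hy2 : y ^ 2 < 1 - η := lt_of_le_of_lt (by gcongr) h2
    have hy1 : y ≤ 1 := by nlinarith
    have hcos := (abs_le.1 (Real.cos_bound (x := y) (by rwa [abs_of_pos hy0]))).2
    rw [abs_of_pos hy0] at hcos
    have hmain : η * y ^ 2 / 2 ≤ 1 - Real.cos y := by
      have : y ^ 2 * y ^ 2 ≤ y ^ 2 * (1 - η) := by gcongr
      nlinarith
    have hexp : Real.exp ((2 * a - d) * s) = Real.exp (-d * s) * Real.exp (a * s) ^ 2 := by
      rw [← Real.exp_nat_mul, ← Real.exp_add]; congr 1; push_cast; ring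
    calc η * M / 2 * δ ^ 2 * Real.exp ((2 * a - d) * s)
        = Real.exp (-d * s) * (M / ω ^ 2 * (η * y ^ 2 / 2)) := by
          rw [hexp, hy]; field_simp
      _ ≤ _ := by gcongr
  linarith

lemma aux_pair {X : Type*} [NormedAddCommGroup X] [InnerProductSpace ℝ X]
    (hdim : 2 ≤ Module.rank ℝ X) : ∃ e₁ e₂ : X, ‖e₁‖ = 1 ∧ ‖e₂‖ = 1 ∧ ⟪e₁, e₂⟫ = 0 := by
  obtain ⟨v, hv⟩ := (Module.le_rank_iff (R := ℝ) (M := X) (n := 2)).1 (by exact_mod_cast hdim)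
  have := InnerProductSpace.gramSchmidtNormed_orthonormal hv
  exact ⟨_, _, this.1 0, this.1 1, this.2 (by decide)⟩

set_option maxHeartbeats 1000000 in
lemma aux_fwd {X : Type*} [NormedAddCommGroup X] [InnerProductSpace ℝ X] [CompleteSpace X]
    (hdim : 2 ≤ Module.rank ℝ X) (t₀ T lm lp M r : ℝ) (hT : 0 < T) (hlm : lm < lp) (hM : 0 < M)
    (hr : 0 < r) (hc : 1 < r * M * ∫ s in (0:ℝ)..T, Real.exp ((2 * lp - lm) * s)) :
    ∃ f : X → X, ContDiff ℝ ⊤ f ∧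
      (∀ x v : X, ‖v‖ = 1 → lm ≤ ⟪fderiv ℝ f x v, v⟫ ∧ ⟪fderiv ℝ f x v, v⟫ ≤ lp) ∧
      (∀ x : X, ‖fderiv ℝ (fderiv ℝ f) x‖ ≤ M) ∧
      ∃ φ : ℝ → X → X, (∀ x : X, φ t₀ x = x) ∧
        (∀ (x : X) (τ : ℝ), HasDerivAt (fun s => φ s x) (f (φ τ x)) τ) ∧
        ¬ Convex ℝ (φ (t₀ + T) '' closedBall (0:X) r) := by
  obtain ⟨e₁, e₂, he₁, he₂, he⟩ := aux_pair hdim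

  obtain ⟨ε, hε, hεl, hεc⟩ : ∃ ε : ℝ, 0 < ε ∧ 2 * ε < lp - lm ∧
      1 < r * M * ∫ s in (0:ℝ)..T, Real.exp ((2 * (lp - ε) - (lm + ε)) * s) := by
    have hcont : Continuous fun ε : ℝ =>
        r * M * ∫ s in (0:ℝ)..T, Real.exp ((2 * (lp - ε) - (lm + ε)) * s) := by
      refine continuous_const.mul ?_
      apply intervalIntegral.continuous_parametric_intervalIntegral_of_continuous'
      simp only [Function.uncurry_def]
      fun_prop
    have e1 : ∀ᶠ ε : ℝ in nhdsWithin 0 (Set.Ioi 0),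
        1 < r * M * ∫ s in (0:ℝ)..T, Real.exp ((2 * (lp - ε) - (lm + ε)) * s) :=
      eventually_nhdsWithin_of_eventually_nhds
        (continuousAt_const.eventually_lt hcont.continuousAt (by simpa using hc))
    have e2 : ∀ᶠ ε : ℝ in nhdsWithin 0 (Set.Ioi 0), ε < (lp - lm) / 2 :=
      eventually_nhdsWithin_of_eventually_nhds (eventually_lt_nhds (by linarith))
    have e3 : ∀ᶠ ε : ℝ in nhdsWithin (0:ℝ) (Set.Ioi 0), 0 < ε := eventually_mem_nhdsWithin
    obtain ⟨ε, h1, h2, h3⟩ := (e1.and (e2.and e3)).exists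
    exact ⟨ε, h3, by linarith, h1⟩
  set a := lp - ε with ha
  set d := lm + ε with hd
  set ω := M / ε with hωd
  have hω : 0 < ω := by positivity
  have hMω : M / ω = ε := by rw [hωd]; field_simp
  obtain ⟨δ, hδ0, hδr, hδ⟩ := aux_key T a d M ω r hT hω hM hr hεc
  set L : X →L[ℝ] ℝ := innerSL ℝ e₁ with hL
  have hLa : ∀ x, L x = ⟪e₁, x⟫ := fun x => rfl
  have hL1 : L e₁ = 1 := by rw [hLa, real_inner_self_eq_norm_sq, he₁]; norm_num
  have hL2 : L e₂ = 0 := he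
  have hLn : ‖L‖ = 1 := by rw [hL, innerSL_apply_norm, he₁]
  let g : ℝ → ℝ := fun u => M / ω ^ 2 * (1 - Real.cos (ω * u))
  have hg : ∀ u, g u = M / ω ^ 2 * (1 - Real.cos (ω * u)) := fun u => rfl
  have hgc : Continuous g := by simp only [g]; fun_prop
  have hgd : ∀ u, HasDerivAt g (ε * Real.sin (ω * u)) u := by
    intro u
    have h1 : HasDerivAt (fun u : ℝ => ω * u) ω u := by
      simpa using (hasDerivAt_id u).const_mul ω
    have h2 := ((h1.cos).const_sub 1).const_mul (M / ω ^ 2)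
    refine h2.congr_deriv ?_
    rw [← hMω]; field_simp
  have hgd' : ∀ u, HasDerivAt (fun u => ε * Real.sin (ω * u)) (M * Real.cos (ω * u)) u := by
    intro u
    have h1 : HasDerivAt (fun u : ℝ => ω * u) ω u := by
      simpa using (hasDerivAt_id u).const_mul ω
    have h2 := (h1.sin).const_mul ε
    refine h2.congr_deriv ?_
    rw [hωd]; field_simp
  let f : X → X := fun x => d • x + ((a - d) * L x) • e₁ + g (L x) • e₂
  have hf' : ∀ x, HasFDerivAt f (d • ContinuousLinearMap.id ℝ X + ((a - d) • L).smulRight e₁ +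
      ((ε * Real.sin (ω * L x)) • L).smulRight e₂) x := by
    intro x
    have h1 : HasFDerivAt (fun x : X => d • x) (d • ContinuousLinearMap.id ℝ X) x :=
      (hasFDerivAt_id x).const_smul d
    have h2 : HasFDerivAt (fun x : X => ((a - d) * L x) • e₁)
        (((a - d) • L).smulRight e₁) x :=
      (L.hasFDerivAt.const_mul (a - d)).smul_const e₁
    have h3 : HasFDerivAt (fun x : X => g (L x) • e₂)
        (((ε * Real.sin (ω * L x)) • L).smulRight e₂) x :=
      ((hgd (L x)).comp_hasFDerivAt x L.hasFDerivAt).smul_const e₂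
    exact (h1.add h2).add h3
  have hfd : fderiv ℝ f = fun x => d • ContinuousLinearMap.id ℝ X + ((a - d) • L).smulRight e₁ +
      (ε * Real.sin (ω * L x)) • L.smulRight e₂ := by
    funext x
    rw [(hf' x).fderiv]
    congr 1
    ext v
    simp [mul_smul]
  have hfsec : ∀ x, HasFDerivAt (fderiv ℝ f)
      (((M * Real.cos (ω * L x)) • L).smulRight (L.smulRight e₂)) x := by
    intro x
    rw [hfd]
    exact (((hgd' (L x)).comp_hasFDerivAt x L.hasFDerivAt).smul_const (L.smulRight e₂)).const_add _
  refine ⟨f, ?_, ?_, ?_, ?_⟩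
  · simp only [f, g]
    fun_prop
  · intro x v hv
    have hin : ⟪fderiv ℝ f x v, v⟫ =
        d + (a - d) * (L v) ^ 2 + ε * Real.sin (ω * L x) * L v * ⟪e₂, v⟫ := by
      rw [hfd]
      simp [inner_add_left, inner_smul_left, hv, ← hLa]
      ring
    have hb1 : |L v| ≤ 1 := by
      have := L.le_opNorm v
      rwa [hLn, hv, Real.norm_eq_abs, one_mul] at this
    have hb2 : |⟪e₂, v⟫| ≤ 1 := by
      have := abs_real_inner_le_norm e₂ v
      rwa [he₂, hv, one_mul] at this
    have hb3 := Real.abs_sin_le_one (ω * L x)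
    have hb : |ε * Real.sin (ω * L x) * L v * ⟪e₂, v⟫| ≤ ε := by
      rw [abs_mul, abs_mul, abs_mul, abs_of_pos hε]
      calc ε * |Real.sin (ω * L x)| * |L v| * |⟪e₂, v⟫| ≤ ε * 1 * 1 * 1 := by gcongr
        _ = ε := by ring
    have hb4 := abs_le.1 hb
    have hsq : (L v) ^ 2 ≤ 1 := by rw [← sq_abs]; nlinarith [abs_nonneg (L v)]
    have had : 0 < a - d := by rw [ha, hd]; linarith
    rw [hin]
    constructor
    · nlinarith [mul_nonneg had.le (sq_nonneg (L v))]
    · nlinarith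
  · intro x
    rw [(hfsec x).fderiv, ContinuousLinearMap.norm_smulRight_apply,
      ContinuousLinearMap.norm_smulRight_apply, norm_smul, hLn, he₂, Real.norm_eq_abs,
      abs_mul, abs_of_pos hM]
    nlinarith [Real.abs_cos_le_one (ω * L x)]
  · let H : ℝ → ℝ → ℝ := fun s u => ∫ τ in (0:ℝ)..s, Real.exp (-d * τ) * g (Real.exp (a * τ) * u)
    have hHd : ∀ s u, HasDerivAt (fun s => H s u)
        (Real.exp (-d * s) * g (Real.exp (a * s) * u)) s := by
      intro s u
      have hcont : Continuous fun τ => Real.exp (-d * τ) * g (Real.exp (a * τ) * u) := by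
        fun_prop
      exact intervalIntegral.integral_hasDerivAt_right (hcont.intervalIntegrable _ _)
        (hcont.stronglyMeasurableAtFilter _ _) hcont.continuousAt
    have hH0 : ∀ u, H 0 u = 0 := fun u => by simp [H]
    have hHz : ∀ s, H s 0 = 0 := fun s => by simp [H, g]
    have hHneg : ∀ s u, H s (-u) = H s u := fun s u => by simp [H, g]
    let ψ : ℝ → X → X := fun s x => Real.exp (d * s) • x +
      ((Real.exp (a * s) - Real.exp (d * s)) * L x) • e₁ + (Real.exp (d * s) * H s (L x)) • e₂
    have hψL : ∀ s x, L (ψ s x) = Real.exp (a * s) * L x := by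
      intro s x
      simp only [ψ, map_add, map_smul, hL1, hL2, smul_eq_mul]
      ring
    have hE : ∀ (b s : ℝ), HasDerivAt (fun s => Real.exp (b * s)) (b * Real.exp (b * s)) s := by
      intro b s
      have h1 : HasDerivAt (fun u : ℝ => b * u) b s := by
        simpa using (hasDerivAt_id s).const_mul b
      exact h1.exp.congr_deriv (mul_comm _ _)
    have hψd : ∀ x s, HasDerivAt (fun s => ψ s x) (f (ψ s x)) s := by
      intro x s
      have h1 := (hE d s).smul_const x
      have h2 := ((((hE a s).sub (hE d s)).mul_const (L x))).smul_const e₁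
      have h3 := ((hE d s).mul (hHd s (L x))).smul_const e₂
      refine ((h1.add h2).add h3).congr_deriv ?_
      have hx : Real.exp (d * s) * (Real.exp (-d * s) * g (Real.exp (a * s) * L x)) =
          g (Real.exp (a * s) * L x) := by
        rw [← mul_assoc, ← Real.exp_add]; simp
      simp only [f, hψL]
      rw [hx]
      simp only [ψ]
      module
    refine ⟨fun t x => ψ (t - t₀) x, ?_, ?_, ?_⟩
    · intro x
      simp [ψ, hH0]
    · intro x τ
      exact (hψd x (τ - t₀)).comp_sub_const τ t₀
    · intro hconv
      simp only [add_sub_cancel_left] at hconv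
      set q := √(r ^ 2 - δ ^ 2) with hq
      have hq0 : 0 ≤ q := Real.sqrt_nonneg _
      have hq2 : q ^ 2 = r ^ 2 - δ ^ 2 := Real.sq_sqrt (by nlinarith)
      have hball : ∀ u : ℝ, u ^ 2 = δ ^ 2 → u • e₁ + q • e₂ ∈ closedBall (0:X) r := by
        intro u hu
        rw [mem_closedBall_zero_iff]
        refine abs_le_of_sq_le_sq' ?_ hr.le |>.2
        rw [norm_add_sq_real, inner_smul_left, inner_smul_right, he, norm_smul, norm_smul, he₁, he₂,
          mul_one, mul_one, Real.norm_eq_abs, Real.norm_eq_abs, sq_abs, sq_abs, hu, hq2]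
        simp
      have hLu : ∀ u : ℝ, L (u • e₁ + q • e₂) = u := by
        intro u
        simp [hL1, hL2]
      have hP := Set.mem_image_of_mem (ψ T) (hball δ rfl)
      have hN := Set.mem_image_of_mem (ψ T) (hball (-δ) (by ring))
      obtain ⟨z, hz, hzeq⟩ := hconv hP hN (a := 1/2) (b := 1/2) (by norm_num) (by norm_num)
        (by norm_num)
      have hmid : ψ T z = (Real.exp (d * T) * (q + H T δ)) • e₂ := by
        refine hzeq.trans ?_
        simp only [ψ, hLu, hHneg]
        module
      have hLz : L z = 0 := by
        have h := congrArg L hmid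
        rw [hψL, map_smul, hL2, smul_zero] at h
        exact (mul_eq_zero.1 h).resolve_left (Real.exp_pos _).ne'
      have hz2 : Real.exp (d * T) • z = Real.exp (d * T) • ((q + H T δ) • e₂) := by
        rw [smul_smul, ← hmid]
        simp [ψ, hLz, hHz]
      have hz3 : z = (q + H T δ) • e₂ := smul_right_injective X (Real.exp_pos (d * T)).ne' hz2
      rw [mem_closedBall_zero_iff, hz3, norm_smul, he₂, mul_one, Real.norm_eq_abs] at hz
      have h5 : q + H T δ ≤ r := (le_abs_self _).trans hz
      have h6 : r < q + H T δ := hδ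
      linarith

lemma aux_K (α T : ℝ) : ∫ s in (0:ℝ)..T, Real.exp (α * s) =
    if α = 0 then T else (Real.exp (α * T) - 1) / α := by
  split_ifs with h
  · simp [h]
  · rw [intervalIntegral.integral_comp_mul_left (fun x => Real.exp x) h, integral_exp]
    simp
    field_simp

lemma aux_mu {X : Type*} [NormedAddCommGroup X] [InnerProductSpace ℝ X]
    (hdim : 2 ≤ Module.rank ℝ X) (A : X →L[ℝ] X) (lm lp : ℝ)
    (h : ∀ v : X, ‖v‖ = 1 → lm ≤ ⟪A v, v⟫ ∧ ⟪A v, v⟫ ≤ lp) :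
    lm ≤ muMinus A ∧ muMinus A ≤ muPlus A ∧ muPlus A ≤ lp := by
  obtain ⟨e₁, e₂, he₁, he₂, he⟩ := aux_pair hdim
  have hne : {c : ℝ | ∃ y : X, ‖y‖ = 1 ∧ c = ⟪A y, y⟫}.Nonempty := ⟨_, e₁, he₁, rfl⟩
  have hlo : lm ∈ lowerBounds {c : ℝ | ∃ y : X, ‖y‖ = 1 ∧ c = ⟪A y, y⟫} := by
    rintro c ⟨y, hy, rfl⟩
    exact (h y hy).1
  have hup : lp ∈ upperBounds {c : ℝ | ∃ y : X, ‖y‖ = 1 ∧ c = ⟪A y, y⟫} := by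
    rintro c ⟨y, hy, rfl⟩
    exact (h y hy).2
  exact ⟨le_csInf hne hlo, csInf_le_csSup hne ⟨_, hlo⟩ ⟨_, hup⟩, csSup_le hne hup⟩

/-- **sharpness.** Let `X` be a real Hilbert space with `dim X ≥ 2`, and
`t₁, t₀, λ₋, λ₊, M₂, r ∈ ℝ` with `λ₋ < λ₊`, `M₂ > 0`.  Set `M₁ = 2λ₊ − λ₋` if `t₁ ≥ t₀` and
`M₁ = λ₊ − 2λ₋` otherwise, and `K(α) = |t₁−t₀|` if `α = 0`, `K(α) = (exp(α|t₁−t₀|)−1)/α`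
otherwise.  If `r·M₂·K(M₁) > 1`, then there is an autonomous ODE `ẋ = f(x)` with analytic
right hand side defined on all of `X` with `λ₋ ≤ μ₋(f'(x))`, `μ₊(f'(x)) ≤ λ₊` and
`‖f''(x)‖ ≤ M₂` everywhere, whose general solution `φ` has a non-convex reachable set
`φ(t₁,t₀,B̄(0,r))`. -/
theorem stmt_9 {X : Type*} [NormedAddCommGroup X] [InnerProductSpace ℝ X] [CompleteSpace X]
    (hdim : 2 ≤ Module.rank ℝ X)
    (t₁ t₀ lm lp M₂ r : ℝ) (hlm : lm < lp) (hM₂ : 0 < M₂)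
    (M₁ : ℝ) (hM₁ : M₁ = if t₀ ≤ t₁ then 2 * lp - lm else lp - 2 * lm)
    (K : ℝ → ℝ)
    (hK : ∀ α : ℝ, K α = if α = 0 then |t₁ - t₀| else (Real.exp (α * |t₁ - t₀|) - 1) / α)
    (hsharp : 1 < r * M₂ * K M₁) :
    ∃ f : X → X, AnalyticOnNhd ℝ f Set.univ ∧
      (∀ x : X, lm ≤ muMinus (fderiv ℝ f x) ∧ muMinus (fderiv ℝ f x) ≤ muPlus (fderiv ℝ f x) ∧
        muPlus (fderiv ℝ f x) ≤ lp) ∧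
      (∀ x : X, ‖fderiv ℝ (fderiv ℝ f) x‖ ≤ M₂) ∧
      ∃ φ : ℝ → X → X, (∀ x : X, φ t₀ x = x) ∧
        (∀ (x : X) (τ : ℝ), HasDerivAt (fun s => φ s x) (f (φ τ x)) τ) ∧
        ¬ Convex ℝ (φ t₁ '' closedBall (0:X) r) := by
  have hKnn : 0 ≤ K M₁ := by
    rw [hK, ← aux_K]
    exact intervalIntegral.integral_nonneg (abs_nonneg _) (fun _ _ => (Real.exp_pos _).le)
  have hr : 0 < r := by
    by_contra hr
    have : r * M₂ * K M₁ ≤ 0 :=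
      mul_nonpos_of_nonpos_of_nonneg (mul_nonpos_of_nonpos_of_nonneg (not_lt.1 hr) hM₂.le) hKnn
    linarith
  have hne : t₁ - t₀ ≠ 0 := by
    intro h0
    rw [hK, ← aux_K, h0] at hsharp
    simp at hsharp
    linarith
  rw [hK, ← aux_K] at hsharp
  rcases le_or_gt t₀ t₁ with hle | hlt
  · rw [if_pos hle] at hM₁
    have hT : 0 < t₁ - t₀ := lt_of_le_of_ne (by linarith) hne.symm
    rw [abs_of_pos hT, hM₁] at hsharp
    obtain ⟨f, hf, hmu, hf2, φ, h0, hφ, hcv⟩ :=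
      aux_fwd hdim t₀ (t₁ - t₀) lm lp M₂ r hT hlm hM₂ hr hsharp
    refine ⟨f, hf.analyticOnNhd, fun x => aux_mu hdim _ _ _ (hmu x), hf2, φ, h0, hφ, ?_⟩
    rwa [add_sub_cancel] at hcv
  · rw [if_neg (not_le.2 hlt)] at hM₁
    have hT : 0 < t₀ - t₁ := by linarith
    have hs : |t₁ - t₀| = t₀ - t₁ := by rw [abs_sub_comm, abs_of_pos hT]
    have hM₁' : M₁ = 2 * (-lm) - (-lp) := by rw [hM₁]; ring
    rw [hs, hM₁'] at hsharp
    obtain ⟨f, hf, hmu, hf2, φ, h0, hφ, hcv⟩ :=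
      aux_fwd hdim t₀ (t₀ - t₁) (-lp) (-lm) M₂ r hT (by linarith) hM₂ hr hsharp
    have hfd : fderiv ℝ (fun x => - f x) = fun x => - fderiv ℝ f x := by
      funext x
      exact fderiv_fun_neg
    refine ⟨fun x => - f x, hf.neg.analyticOnNhd, fun x => aux_mu hdim _ _ _ ?_, ?_,
      fun t x => φ (2 * t₀ - t) x, ?_, ?_, ?_⟩
    · intro v hv
      have := hmu x v hv
      rw [hfd]
      simp only [neg_apply, inner_neg_left]
      constructor <;> linarith
    · intro x
      rw [hfd, fderiv_fun_neg]
      exact (norm_neg (fderiv ℝ (fderiv ℝ f) x)).trans_le (hf2 x)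
    · intro x
      have : 2 * t₀ - t₀ = t₀ := by ring
      simp only [this, h0]
    · intro x τ
      exact (hφ x (2 * t₀ - τ)).comp_const_sub (2 * t₀) τ
    · have : t₀ + (t₀ - t₁) = 2 * t₀ - t₁ := by ring
      rwa [this] at hcv
end

section
/- For t₁ > 0 consider the closed-loop control system ẋ₁ = u(x), ẋ₂ = u(x)², x(0) = (0,0), where admissible feedbacks are Lipschitz-continuous maps u : ℝ² → [0,1]. Let R(t₁) = {x(t₁) : x : [0,t₁] → ℝ² solves the system for some admissible u}. Then (0,0) ∈ R(t₁) and (t₁,t₁) ∈ R(t₁), but the midpoint (t₁/2, t₁/2) ∉ R(t₁); hence R(t₁) is not convex, for every t₁ > 0. (Key step: there is no continuous function v : [0,t₁] → [0,1] with ∫₀^{t₁} v(τ) dτ = t₁/2 and ∫₀^{t₁} v(τ)² dτ = t₁/2.) -/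
open Set

/-- The reachable set at time `t₁` of the closed-loop system
`ẋ₁ = u(x), ẋ₂ = u(x)², x(0) = (0,0)` over all Lipschitz-continuous feedbacks
`u : ℝ² → [0,1]`. -/
def reachSet (t₁ : ℝ) : Set (ℝ × ℝ) :=
  {p : ℝ × ℝ | ∃ u : ℝ × ℝ → ℝ, (∃ L : NNReal, LipschitzWith L u) ∧
    (∀ y, u y ∈ Icc (0:ℝ) 1) ∧
    ∃ x : ℝ → ℝ × ℝ, x 0 = (0, 0) ∧
      (∀ t ∈ Icc 0 t₁,
        HasDerivWithinAt x (u (x t), (u (x t)) ^ 2) (Icc 0 t₁) t) ∧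
      x t₁ = p}

theorem key_step (t₁ : ℝ) (ht₁ : 0 < t₁) :
    ¬ ∃ v : ℝ → ℝ, ContinuousOn v (Icc 0 t₁) ∧ (∀ t ∈ Icc 0 t₁, v t ∈ Icc (0:ℝ) 1) ∧
        (∫ τ in (0)..t₁, v τ) = t₁ / 2 ∧ (∫ τ in (0)..t₁, (v τ) ^ 2) = t₁ / 2 := by
  rintro ⟨v, hc, hv, h1, h2⟩
  have hi1 : IntervalIntegrable v MeasureTheory.volume 0 t₁ :=
    ContinuousOn.intervalIntegrable_of_Icc ht₁.le hc
  have hi2 : IntervalIntegrable (fun t => v t ^ 2) MeasureTheory.volume 0 t₁ :=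
    ContinuousOn.intervalIntegrable_of_Icc ht₁.le (hc.pow 2)
  have hz : ∀ c ∈ Icc 0 t₁, v c - v c ^ 2 ≤ 0 := by
    intro c hcm
    by_contra! hlt
    have hp : 0 < ∫ τ in (0)..t₁, (v τ - v τ ^ 2) := by
      refine intervalIntegral.integral_pos ht₁ (hc.sub (hc.pow 2)) ?_ ⟨c, hcm, hlt⟩
      intro x hx
      have := hv x ⟨hx.1.le, hx.2⟩
      have ha := this.1
      have hb := this.2
      nlinarith
    rw [intervalIntegral.integral_sub hi1 hi2, h1, h2] at hp
    linarith
  have hpc : (v '' Icc 0 t₁).OrdConnected := (isPreconnected_Icc.image v hc).ordConnected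
  have hhalf : (1 / 2 : ℝ) ∉ v '' Icc 0 t₁ := by
    rintro ⟨c, hcm, h⟩
    have := hz c hcm
    rw [h] at this
    norm_num at this
  have h01 : ∀ c ∈ Icc 0 t₁, v c = 0 ∨ v c = 1 := by
    intro c hcm
    obtain ⟨ha, hb⟩ := hv c hcm
    have := hz c hcm
    have h0 : v c * (v c - 1) = 0 := by nlinarith
    rcases mul_eq_zero.1 h0 with h | h
    · exact Or.inl h
    · exact Or.inr (by linarith)
  have hconst : ∀ c ∈ Icc 0 t₁, v c = v 0 := by
    intro c hcm
    have h0m : (0:ℝ) ∈ Icc 0 t₁ := ⟨le_rfl, ht₁.le⟩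
    rcases h01 c hcm with h | h <;> rcases h01 0 h0m with h' | h'
    · rw [h, h']
    · exact absurd (hpc.out ⟨c, hcm, h⟩ ⟨0, h0m, h'⟩ ⟨by norm_num, by norm_num⟩) hhalf
    · exact absurd (hpc.out ⟨0, h0m, h'⟩ ⟨c, hcm, h⟩ ⟨by norm_num, by norm_num⟩) hhalf
    · rw [h, h']
  have he : (∫ τ in (0)..t₁, v τ) = ∫ τ in (0)..t₁, v 0 := by
    apply intervalIntegral.integral_congr
    intro c hcm
    rw [uIcc_of_le ht₁.le] at hcm
    exact hconst c hcm
  rw [h1, intervalIntegral.integral_const, smul_eq_mul] at he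
  rcases h01 0 ⟨le_rfl, ht₁.le⟩ with h | h <;> rw [h] at he <;> linarith

theorem mid_not_mem (t₁ : ℝ) (ht₁ : 0 < t₁) : (t₁ / 2, t₁ / 2) ∉ reachSet t₁ := by
  rintro ⟨u, ⟨L, hL⟩, hu, x, hx0, hx, hx1⟩
  have hxc : ContinuousOn x (Icc 0 t₁) := fun t ht => (hx t ht).continuousWithinAt
  have hvc : ContinuousOn (fun t => u (x t)) (Icc 0 t₁) := hL.continuous.comp_continuousOn hxc
  have hd : ∀ t ∈ Ioo 0 t₁, HasDerivAt x (u (x t), (u (x t)) ^ 2) t := fun t ht =>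
    (hx t (Ioo_subset_Icc_self ht)).hasDerivAt (Icc_mem_nhds ht.1 ht.2)
  refine key_step t₁ ht₁ ⟨fun t => u (x t), hvc, fun t _ => hu _, ?_, ?_⟩
  · rw [intervalIntegral.integral_eq_sub_of_hasDerivAt_of_le ht₁.le
      (f := fun t => (x t).1) (continuous_fst.comp_continuousOn hxc)
      (fun t ht => (hd t ht).fst) (ContinuousOn.intervalIntegrable_of_Icc ht₁.le hvc)]
    simp [hx0, hx1]
  · rw [intervalIntegral.integral_eq_sub_of_hasDerivAt_of_le ht₁.le
      (f := fun t => (x t).2) (continuous_snd.comp_continuousOn hxc)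
      (fun t ht => (hd t ht).snd) (ContinuousOn.intervalIntegrable_of_Icc ht₁.le (hvc.pow 2))]
    simp [hx0, hx1]

/-- For every `t₁ > 0`, the reachable set `R(t₁)` of the closed-loop system
`ẋ₁ = u(x), ẋ₂ = u(x)², x(0) = (0,0)` with Lipschitz feedbacks `u : ℝ² → [0,1]` contains
`(0,0)` and `(t₁,t₁)` but not their midpoint `(t₁/2, t₁/2)`; in particular it is not convex.
(Key step: no continuous `v : [0,t₁] → [0,1]` has `∫₀^{t₁} v = t₁/2 = ∫₀^{t₁} v²`.) -/
theorem stmt_10 (t₁ : ℝ) (ht₁ : 0 < t₁) :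
    (0, 0) ∈ reachSet t₁ ∧ (t₁, t₁) ∈ reachSet t₁ ∧
      (t₁ / 2, t₁ / 2) ∉ reachSet t₁ ∧ ¬ Convex ℝ (reachSet t₁) ∧
      ¬ ∃ v : ℝ → ℝ, ContinuousOn v (Icc 0 t₁) ∧ (∀ t ∈ Icc 0 t₁, v t ∈ Icc (0:ℝ) 1) ∧
        (∫ τ in (0)..t₁, v τ) = t₁ / 2 ∧ (∫ τ in (0)..t₁, (v τ) ^ 2) = t₁ / 2 := by
  have h0 : ((0:ℝ), (0:ℝ)) ∈ reachSet t₁ := by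
    refine ⟨fun _ => 0, ⟨0, LipschitzWith.const 0⟩, fun _ => by simp, fun _ => (0, 0), rfl, ?_, rfl⟩
    intro t _
    simpa using (hasDerivWithinAt_const t (Icc 0 t₁) (0:ℝ)).prodMk
      (hasDerivWithinAt_const t (Icc 0 t₁) (0:ℝ))
  have h1 : (t₁, t₁) ∈ reachSet t₁ := by
    refine ⟨fun _ => 1, ⟨0, LipschitzWith.const 1⟩, fun _ => by simp, fun t => (t, t), rfl, ?_, rfl⟩
    intro t _
    simpa using (hasDerivWithinAt_id t (Icc 0 t₁)).prodMk (hasDerivWithinAt_id t (Icc 0 t₁))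
  refine ⟨h0, h1, mid_not_mem t₁ ht₁, ?_, key_step t₁ ht₁⟩
  intro hconv
  apply mid_not_mem t₁ ht₁
  have := hconv h0 h1 (a := 1 / 2) (b := 1 / 2) (by norm_num) (by norm_num) (by norm_num)
  convert this using 1
  ext <;> simp <;> ring
end

section
/- Let X be a real Hilbert space, I ⊆ ℝ an interval, U ⊆ I × X relatively open, f : U → X continuous and of class C² with respect to its second argument, and φ the general solution of ẋ = f(t,x). Let t₀, t₁ ∈ I and x ∈ X with (t₁,t₀,x) ∈ dom φ, and set F = φ(t₁,t₀,·). Then for every h ∈ X, F'(x)⁻¹ F''(x)h² = ∫_{t₀}^{t₁} D₃φ(τ,t₀,x)⁻¹ D₂²f(τ, φ(τ,t₀,x)) (D₃φ(τ,t₀,x)h)² dτ. -/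
open Filter Topology Metric Set intervalIntegral


theorem aux_bound {X : Type*} [NormedAddCommGroup X] [NormedSpace ℝ X]
    (t₀ t₁ : ℝ) (w w' : ℝ → X) (δ M : ℝ) (hM : 0 ≤ M)
    (hw : ∀ τ ∈ uIcc t₀ t₁, HasDerivWithinAt w (w' τ) (uIcc t₀ t₁) τ)
    (hb : ∀ τ ∈ uIcc t₀ t₁, ‖w τ‖ < δ → ‖w' τ‖ ≤ M * ‖w τ‖)
    (h0 : w t₀ ≠ 0)
    (hs : ‖w t₀‖ * Real.exp (M * |t₁ - t₀| + 1) < δ) :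
    ∀ τ ∈ uIcc t₀ t₁, ‖w τ‖ ≤ Real.exp (M * |t₁ - t₀| + 1) * ‖w t₀‖ := by
  set L := M * |t₁ - t₀| + 1 with hL
  have hL0 : 0 < L := by positivity
  have hε : 0 < ‖w t₀‖ := norm_pos_iff.2 h0
  have hγ : ∀ θ ∈ Icc (0:ℝ) 1, t₀ + θ * (t₁ - t₀) ∈ uIcc t₀ t₁ := by
    intro θ hθ
    have := (convex_uIcc t₀ t₁).add_smul_sub_mem left_mem_uIcc right_mem_uIcc hθ
    simpa using this
  have hv : ∀ θ ∈ Icc (0:ℝ) 1, HasDerivWithinAt (fun θ => w (t₀ + θ * (t₁ - t₀)))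
      ((t₁ - t₀) • w' (t₀ + θ * (t₁ - t₀))) (Icc 0 1) θ := by
    intro θ hθ
    have h1 : HasDerivWithinAt (fun θ : ℝ => t₀ + θ * (t₁ - t₀)) (t₁ - t₀) (Icc 0 1) θ := by
      simpa using (((hasDerivWithinAt_id θ (Icc 0 1)).mul_const (t₁ - t₀)).const_add t₀)
    exact (hw _ (hγ θ hθ)).scomp θ h1 (fun θ hθ => hγ θ hθ)
  have hmono : ∀ θ ≤ (1:ℝ), ‖w t₀‖ * Real.exp (L * θ) ≤ ‖w t₀‖ * Real.exp L := by
    intro θ hθ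
    gcongr
    nlinarith
  have key := image_norm_le_of_norm_deriv_right_lt_deriv_boundary
    (f := fun θ => w (t₀ + θ * (t₁ - t₀)))
    (f' := fun θ => (t₁ - t₀) • w' (t₀ + θ * (t₁ - t₀)))
    (a := 0) (b := 1) (B := fun θ => ‖w t₀‖ * Real.exp (L * θ))
    (B' := fun θ => ‖w t₀‖ * (Real.exp (L * θ) * L))
    (fun θ hθ => (hv θ hθ).continuousWithinAt)
    (fun θ hθ => (hv θ ⟨hθ.1, hθ.2.le⟩).mono_of_mem_nhdsWithin (Icc_mem_nhdsGE_of_mem hθ))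
    (by simp)
    (fun θ => by
      have h1 : HasDerivAt (fun θ : ℝ => L * θ) L θ := by
        simpa using (hasDerivAt_id θ).const_mul L
      exact (h1.exp).const_mul _)
    (by
      intro θ hθ heq
      have h1 := hb _ (hγ θ ⟨hθ.1, hθ.2.le⟩) (by rw [heq]; exact (hmono θ hθ.2.le).trans_lt hs)
      rw [heq] at h1
      rw [norm_smul, Real.norm_eq_abs]
      have hB : 0 < ‖w t₀‖ * Real.exp (L * θ) := by positivity
      calc |t₁ - t₀| * ‖w' (t₀ + θ * (t₁ - t₀))‖
          ≤ |t₁ - t₀| * (M * (‖w t₀‖ * Real.exp (L * θ))) := by gcongr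
        _ < ‖w t₀‖ * (Real.exp (L * θ) * L) := by rw [hL] at *; nlinarith)
  intro τ hτ
  obtain ⟨θ, hθ, rfl⟩ : ∃ θ ∈ Icc (0:ℝ) 1, t₀ + θ * (t₁ - t₀) = τ := by
    rw [← segment_eq_uIcc, segment_eq_image'] at hτ
    simpa using hτ
  exact (key hθ).trans ((hmono θ hθ.2).trans (by rw [mul_comm]))

theorem aux_tube {X : Type*} [NormedAddCommGroup X] [NormedSpace ℝ X]
    (I : Set ℝ) (U : Set (ℝ × X))
    (hU : ∃ W : Set (ℝ × X), IsOpen W ∧ U = W ∩ I ×ˢ (univ : Set X))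
    (f' : ℝ → X → X →L[ℝ] X) (f'' : ℝ → X → X →L[ℝ] X →L[ℝ] X)
    (hf'c : ContinuousOn (fun p : ℝ × X => f' p.1 p.2) U)
    (hf''c : ContinuousOn (fun p : ℝ × X => f'' p.1 p.2) U)
    (J : Set ℝ) (hJ : IsCompact J) (hJI : J ⊆ I) (u : ℝ → X) (hu : ContinuousOn u J)
    (huU : ∀ τ ∈ J, (τ, u τ) ∈ U) :
    ∃ δ > 0, ∃ M ≥ 0, ∀ τ ∈ J, ∀ y, ‖y - u τ‖ < δ →
      (τ, y) ∈ U ∧ ‖f' τ y‖ ≤ M ∧ ‖f'' τ y‖ ≤ M := by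
  suffices H : ∃ δ > 0, ∃ M ≥ 0, ∀ τ ∈ J, τ ∈ J → ∀ y, ‖y - u τ‖ < δ →
      (τ, y) ∈ U ∧ ‖f' τ y‖ ≤ M ∧ ‖f'' τ y‖ ≤ M by
    obtain ⟨δ, hδ, M, hM, H⟩ := H
    exact ⟨δ, hδ, M, hM, fun τ hτ => H τ hτ hτ⟩
  refine hJ.induction_on (p := fun S => ∃ δ > 0, ∃ M ≥ 0, ∀ τ ∈ S, τ ∈ J → ∀ y, ‖y - u τ‖ < δ →
      (τ, y) ∈ U ∧ ‖f' τ y‖ ≤ M ∧ ‖f'' τ y‖ ≤ M) ?_ ?_ ?_ ?_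
  · exact ⟨1, one_pos, 0, le_rfl, by simp⟩
  · rintro s t hst ⟨δ, hδ, M, hM, H⟩
    exact ⟨δ, hδ, M, hM, fun τ hτ => H τ (hst hτ)⟩
  · rintro s t ⟨δ, hδ, M, hM, H⟩ ⟨δ', hδ', M', hM', H'⟩
    refine ⟨min δ δ', lt_min hδ hδ', max M M', le_max_of_le_left hM, ?_⟩
    rintro τ (hτ | hτ) hJτ y hy
    · obtain ⟨h1, h2, h3⟩ := H τ hτ hJτ y (hy.trans_le (min_le_left _ _))
      exact ⟨h1, h2.trans (le_max_left _ _), h3.trans (le_max_left _ _)⟩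
    · obtain ⟨h1, h2, h3⟩ := H' τ hτ hJτ y (hy.trans_le (min_le_right _ _))
      exact ⟨h1, h2.trans (le_max_right _ _), h3.trans (le_max_right _ _)⟩
  · intro τ₀ hτ₀
    have hp := huU τ₀ hτ₀
    obtain ⟨W, hW, rfl⟩ := hU
    have e1 := ((hf'c _ hp).norm).eventually (gt_mem_nhds (lt_add_one _))
    have e2 := (ContinuousWithinAt.norm (E := X →L[ℝ] X →L[ℝ] X) (f := fun p : ℝ × X => f'' p.1 p.2)
      (hf''c _ hp)).eventually (gt_mem_nhds (lt_add_one _))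
    have e3 : ∀ᶠ q : ℝ × X in 𝓝 (τ₀, u τ₀), q ∈ W := hW.mem_nhds hp.1
    rw [eventually_nhdsWithin_iff] at e1 e2
    obtain ⟨r, hr, hball⟩ := Metric.eventually_nhds_iff.1 (e1.and (e2.and e3))
    refine ⟨{τ | dist τ τ₀ < r ∧ dist (u τ) (u τ₀) < r / 2}, ?_, r / 2, by positivity,
      max (‖f' τ₀ (u τ₀)‖ + 1) (‖f'' τ₀ (u τ₀)‖ + 1), by positivity, ?_⟩
    · have c1 : ∀ᶠ τ in 𝓝[J] τ₀, dist τ τ₀ < r :=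
        mem_nhdsWithin_of_mem_nhds (Metric.ball_mem_nhds _ hr)
      have c2 : ∀ᶠ τ in 𝓝[J] τ₀, dist (u τ) (u τ₀) < r / 2 :=
        (hu τ₀ hτ₀).eventually (Metric.ball_mem_nhds _ (half_pos hr))
      exact c1.and c2
    · rintro τ ⟨hτ1, hτ2⟩ hJτ y hy
      have hd : dist (τ, y) (τ₀, u τ₀) < r := by
        rw [Prod.dist_eq]
        refine max_lt hτ1 ?_
        have := dist_triangle y (u τ) (u τ₀)
        rw [← dist_eq_norm] at hy
        simp only
        linarith
      obtain ⟨b1, b2, b3⟩ := hball hd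
      have hm : (τ, y) ∈ W ∩ I ×ˢ (univ : Set X) := ⟨b3, hJI hJτ, mem_univ _⟩
      exact ⟨hm, (b1 hm).le.trans (le_max_left _ _), (b2 hm).le.trans (le_max_right _ _)⟩

theorem aux_taylor {E G : Type*} [NormedAddCommGroup E] [NormedSpace ℝ E]
    [NormedAddCommGroup G] [NormedSpace ℝ G]
    (g : E → G) (g' : E → E →L[ℝ] G) (g'' : E →L[ℝ] E →L[ℝ] G) (x : E)
    (h1 : ∀ᶠ y in 𝓝 x, HasFDerivAt g (g' y) y) (h2 : HasFDerivAt g' g'' x) :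
    (fun v => g (x + v) - g x - g' x v - (1/2 : ℝ) • g'' v v) =o[𝓝 0] fun v => ‖v‖ ^ 2 := by
  rw [Asymptotics.isLittleO_iff]
  intro c hc
  have e2 := Asymptotics.isLittleO_iff.1 (hasFDerivAt_iff_isLittleO_nhds_zero.1 h2) hc
  have e1 : ∀ᶠ v in 𝓝 (0:E), HasFDerivAt g (g' (x + v)) (x + v) := by
    have : Tendsto (fun v => x + v) (𝓝 (0:E)) (𝓝 x) := by
      have : ContinuousAt (fun v : E => x + v) 0 := by fun_prop
      simpa [ContinuousAt] using this
    exact this.eventually h1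
  obtain ⟨r, hr, hball⟩ := Metric.eventually_nhds_iff.1 (e1.and e2)
  filter_upwards [Metric.ball_mem_nhds (0:E) hr] with v hv
  rw [mem_ball_zero_iff] at hv
  have hin : ∀ θ ∈ Icc (0:ℝ) 1, ‖θ • v‖ ≤ ‖v‖ := by
    intro θ hθ
    rw [norm_smul, Real.norm_eq_abs, abs_of_nonneg hθ.1]
    exact mul_le_of_le_one_left (norm_nonneg _) hθ.2
  have key := norm_image_sub_le_of_norm_deriv_le_segment_01'
    (f := fun θ : ℝ => g (x + θ • v) - θ • g' x v - (θ ^ 2 / 2) • g'' v v)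
    (f' := fun θ : ℝ => g' (x + θ • v) v - g' x v - θ • g'' v v)
    (C := c * ‖v‖ ^ 2) ?_ ?_
  · rw [Real.norm_of_nonneg (by positivity : (0:ℝ) ≤ ‖v‖ ^ 2)]
    refine le_trans (le_of_eq ?_) key
    congr 1
    simp
    abel
  · intro θ hθ
    refine HasDerivAt.hasDerivWithinAt ?_
    have hg := (hball (y := θ • v) (by rw [dist_zero_right]; exact (hin θ hθ).trans_lt hv)).1
    have hl : HasDerivAt (fun θ : ℝ => x + θ • v) v θ := by
      simpa using ((hasDerivAt_id θ).smul_const v).const_add x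
    have a1 := hg.comp_hasDerivAt θ hl
    have a2 : HasDerivAt (fun θ : ℝ => θ • g' x v) (g' x v) θ := by
      simpa using (hasDerivAt_id θ).smul_const (g' x v)
    have a3 : HasDerivAt (fun θ : ℝ => (θ ^ 2 / 2) • g'' v v) (θ • g'' v v) θ := by
      have : HasDerivAt (fun θ : ℝ => θ ^ 2 / 2) θ θ := by
        simpa using ((hasDerivAt_pow 2 θ).div_const 2)
      exact this.smul_const _
    exact (a1.sub a2).sub a3
  · intro θ hθ
    have hθ' : θ ∈ Icc (0:ℝ) 1 := ⟨hθ.1, hθ.2.le⟩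
    have hg := (hball (y := θ • v) (by rw [dist_zero_right]; exact (hin θ hθ').trans_lt hv)).2
    have : g' (x + θ • v) v - g' x v - θ • g'' v v
        = (g' (x + θ • v) - g' x - g'' (θ • v)) v := by simp
    rw [this]
    calc _ ≤ ‖g' (x + θ • v) - g' x - g'' (θ • v)‖ * ‖v‖ := ContinuousLinearMap.le_opNorm _ _
      _ ≤ (c * ‖v‖) * ‖v‖ := by
        gcongr
        exact hg.trans (by gcongr; exact hin θ hθ')
      _ = c * ‖v‖ ^ 2 := by ring

theorem aux_limit {E G : Type*} [NormedAddCommGroup E] [NormedSpace ℝ E]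
    [NormedAddCommGroup G] [NormedSpace ℝ G]
    (g : E → G) (g' : E → E →L[ℝ] G) (g'' : E →L[ℝ] E →L[ℝ] G) (x : E)
    (h1 : ∀ᶠ y in 𝓝 x, HasFDerivAt g (g' y) y) (h2 : HasFDerivAt g' g'' x)
    (y : ℝ → E) (z : E) (hw : Tendsto (fun s : ℝ => s⁻¹ • (y s - x)) (𝓝[≠] 0) (𝓝 z)) :
    Tendsto (fun s : ℝ => (s ^ 2)⁻¹ • (g (y s) - g x - g' x (y s - x))) (𝓝[≠] 0)
      (𝓝 ((1/2 : ℝ) • g'' z z)) := by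
  have hs0 : Tendsto (fun s : ℝ => s) (𝓝[≠] 0) (𝓝 0) := tendsto_id.mono_left nhdsWithin_le_nhds
  have hw0 : Tendsto (fun s : ℝ => y s - x) (𝓝[≠] 0) (𝓝 0) := by
    have := hs0.smul hw
    rw [zero_smul] at this
    refine this.congr' ?_
    filter_upwards [self_mem_nhdsWithin] with s hs
    exact smul_inv_smul₀ hs _
  have ht := (aux_taylor g g' g'' x h1 h2).comp_tendsto hw0
  have hO : (fun s : ℝ => ‖y s - x‖ ^ 2) =O[𝓝[≠] 0] fun s : ℝ => s ^ 2 := by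
    have hb := (hw.isBigO_one ℝ)
    have : (fun s : ℝ => y s - x) =O[𝓝[≠] 0] fun s : ℝ => s := by
      have h3 := (Asymptotics.isBigO_refl (fun s : ℝ => s) (𝓝[≠] 0)).smul hb
      simp only [smul_eq_mul, mul_one] at h3
      refine h3.congr' ?_ EventuallyEq.rfl
      filter_upwards [self_mem_nhdsWithin] with s hs
      exact smul_inv_smul₀ hs _
    exact (this.norm_left).pow 2
  have h4 := (ht.trans_isBigO hO)
  have h5 : Tendsto (fun s : ℝ => (s ^ 2)⁻¹ • (g (x + (y s - x)) - g x - g' x (y s - x) -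
      (1/2 : ℝ) • g'' (y s - x) (y s - x))) (𝓝[≠] 0) (𝓝 0) := by
    have := h4.tendsto_inv_smul_nhds_zero
    exact this
  have h6 : Tendsto (fun s : ℝ => (1/2 : ℝ) • g'' (s⁻¹ • (y s - x)) (s⁻¹ • (y s - x))) (𝓝[≠] 0)
      (𝓝 ((1/2 : ℝ) • g'' z z)) := by
    have hc : Continuous (fun z : E => (1/2 : ℝ) • g'' z z) := by fun_prop
    exact (hc.tendsto z).comp hw
  have h7 := h5.add h6
  rw [zero_add] at h7
  refine h7.congr ?_
  intro s
  rw [add_sub_cancel]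
  generalize y s - x = v
  rw [smul_sub _ _ ((1/2 : ℝ) • g'' v v)]
  have : (1/2 : ℝ) • g'' (s⁻¹ • v) (s⁻¹ • v) = (s ^ 2)⁻¹ • (1/2 : ℝ) • g'' v v := by
    simp only [map_smul, smul_apply, smul_smul]
    congr 1
    ring
  rw [this, sub_add_cancel]

theorem aux_Ioo {t₀ t₁ T τ : ℝ} (hT : T ∈ uIcc t₀ t₁) (hτ : τ ∈ Ioo (min t₀ T) (max t₀ T)) :
    τ ∈ Ioo (min t₀ t₁) (max t₀ t₁) := by
  have h1 : min t₀ t₁ ≤ T := hT.1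
  have h2 : T ≤ max t₀ t₁ := hT.2
  exact ⟨(le_min (min_le_left _ _) h1).trans_lt hτ.1, hτ.2.trans_le (max_le (le_max_left _ _) h2)⟩

theorem aux_sub {t₀ t₁ T : ℝ} (hT : T ∈ uIcc t₀ t₁) : uIcc t₀ T ⊆ uIcc t₀ t₁ :=
  uIcc_subset_uIcc left_mem_uIcc hT

theorem aux_ftc {X : Type*} [NormedAddCommGroup X] [NormedSpace ℝ X] [CompleteSpace X]
    (t₀ t₁ : ℝ) (g g' : ℝ → X) (hg : ContinuousOn g (uIcc t₀ t₁))
    (hd : ∀ τ ∈ Ioo (min t₀ t₁) (max t₀ t₁), HasDerivAt g (g' τ) τ)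
    (hg' : ContinuousOn g' (uIcc t₀ t₁)) (T : ℝ) (hT : T ∈ uIcc t₀ t₁) :
    ∫ τ in t₀..T, g' τ = g T - g t₀ :=
  integral_eq_sub_of_hasDeriv_right (hg.mono (aux_sub hT))
    (fun τ hτ => (hd τ (aux_Ioo hT hτ)).hasDerivWithinAt)
    (hg'.mono (aux_sub hT)).intervalIntegrable

theorem aux_dct {X : Type*} [NormedAddCommGroup X] [NormedSpace ℝ X]
    (t₀ t₁ : ℝ) (l : Filter ℝ) [l.IsCountablyGenerated] (F : ℝ → ℝ → X) (g : ℝ → X) (C : ℝ)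
    (hF : ∀ᶠ s in l, ContinuousOn (F s) (uIcc t₀ t₁))
    (hC : ∀ᶠ s in l, ∀ τ ∈ uIcc t₀ t₁, ‖F s τ‖ ≤ C)
    (hl : ∀ τ ∈ uIcc t₀ t₁, Tendsto (fun s => F s τ) l (𝓝 (g τ))) (T : ℝ)
    (hT : T ∈ uIcc t₀ t₁) :
    Tendsto (fun s => ∫ τ in t₀..T, F s τ) l (𝓝 (∫ τ in t₀..T, g τ)) := by
  have hsub : uIoc t₀ T ⊆ uIcc t₀ t₁ := uIoc_subset_uIcc.trans (aux_sub hT)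
  refine tendsto_integral_filter_of_dominated_convergence (fun _ => C) ?_ ?_ ?_ ?_
  · filter_upwards [hF] with s hs
    exact (hs.mono hsub).aestronglyMeasurable measurableSet_uIoc
  · filter_upwards [hC] with s hs
    exact Eventually.of_forall fun τ hτ => hs τ (hsub hτ)
  · exact intervalIntegrable_const
  · exact Eventually.of_forall fun τ hτ => hl τ (hsub hτ)

theorem aux_slope {E G : Type*} [NormedAddCommGroup E] [NormedSpace ℝ E]
    [NormedAddCommGroup G] [NormedSpace ℝ G] (g : E → G) (g' : E →L[ℝ] G) (x : E)
    (hg : HasFDerivAt g g' x) (h : E) :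
    Tendsto (fun s : ℝ => s⁻¹ • (g (x + s • h) - g x)) (𝓝[≠] 0) (𝓝 (g' h)) := by
  have := (hg.hasLineDerivAt h)
  exact this.tendsto_slope_zero

theorem aux_lip {X : Type*} [NormedAddCommGroup X] [NormedSpace ℝ X]
    (g : X → X) (g' : X → X →L[ℝ] X) (g'' : X → X →L[ℝ] X →L[ℝ] X) (u : X) (δ M : ℝ)
    (hM : 0 ≤ M)
    (h1 : ∀ y, ‖y - u‖ < δ → HasFDerivAt g (g' y) y)
    (h2 : ∀ y, ‖y - u‖ < δ → HasFDerivAt g' (g'' y) y)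
    (b1 : ∀ y, ‖y - u‖ < δ → ‖g' y‖ ≤ M) (b2 : ∀ y, ‖y - u‖ < δ → ‖g'' y‖ ≤ M)
    (y : X) (hy : ‖y - u‖ < δ) :
    ‖g y - g u‖ ≤ M * ‖y - u‖ ∧ ‖g y - g u - g' u (y - u)‖ ≤ M * ‖y - u‖ ^ 2 := by
  have hδ : 0 < δ := (norm_nonneg _).trans_lt hy
  have hu : u ∈ ball u δ := mem_ball_self hδ
  have hm : ∀ z, z ∈ ball u δ ↔ ‖z - u‖ < δ := fun z => mem_ball_iff_norm
  constructor
  · exact (convex_ball u δ).norm_image_sub_le_of_norm_hasFDerivWithin_le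
      (fun z hz => (h1 z ((hm z).1 hz)).hasFDerivWithinAt) (fun z hz => b1 z ((hm z).1 hz)) hu
      ((hm y).2 hy)
  · have hlip : ∀ z, ‖z - u‖ < δ → ‖g' z - g' u‖ ≤ M * ‖z - u‖ := fun z hz =>
      (convex_ball u δ).norm_image_sub_le_of_norm_hasFDerivWithin_le
      (fun z hz => (h2 z ((hm z).1 hz)).hasFDerivWithinAt) (fun z hz => b2 z ((hm z).1 hz)) hu
      ((hm z).2 hz)
    have key := (convex_closedBall u ‖y - u‖).norm_image_sub_le_of_norm_hasFDerivWithin_le'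
      (f := g) (f' := g') (φ := g' u) (C := M * ‖y - u‖) (x := u) (y := y) (𝕜 := ℝ)
      (fun z hz => (h1 z ((mem_closedBall_iff_norm.1 hz).trans_lt hy)).hasFDerivWithinAt)
      (fun z hz => (hlip z ((mem_closedBall_iff_norm.1 hz).trans_lt hy)).trans
        (by gcongr; exact mem_closedBall_iff_norm.1 hz))
      (mem_closedBall_self (norm_nonneg _)) (mem_closedBall_iff_norm.2 le_rfl)
    refine key.trans (le_of_eq (by ring))

theorem aux_inv {X : Type*} [NormedAddCommGroup X] [NormedSpace ℝ X] [CompleteSpace X]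
    (D : ℝ → (X ≃L[ℝ] X)) (A : X →L[ℝ] X) (τ : ℝ)
    (hD : HasDerivAt (fun t => (D t : X →L[ℝ] X)) (A ∘L (D τ : X →L[ℝ] X)) τ) :
    HasDerivAt (fun t => ((D t).symm : X →L[ℝ] X)) (-(((D τ).symm : X →L[ℝ] X) ∘L A)) τ := by
  have h1 := hasFDerivAt_ringInverse (𝕜 := ℝ) (D τ).toUnit
  have h2 := HasFDerivAt.comp_hasDerivAt (f := fun t => (D t : X →L[ℝ] X)) τ h1 hD
  have h3 : (Ring.inverse ∘ fun t => (D t : X →L[ℝ] X)) =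
      fun t => ((D t).symm : X →L[ℝ] X) := by
    funext t
    simp [ContinuousLinearMap.ringInverse_equiv, ContinuousLinearMap.inverse_equiv]
  rw [h3] at h2
  have h4 : (((D τ).toUnit⁻¹ : (X →L[ℝ] X)ˣ) : X →L[ℝ] X) = ((D τ).symm : X →L[ℝ] X) := rfl
  refine h2.congr_deriv ?_
  rw [h4]
  ext v
  simp

theorem aux_inv_cont {X : Type*} [NormedAddCommGroup X] [NormedSpace ℝ X] [CompleteSpace X]
    (D : ℝ → (X ≃L[ℝ] X)) (J : Set ℝ)
    (hD : ContinuousOn (fun t => (D t : X →L[ℝ] X)) J) :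
    ContinuousOn (fun t => ((D t).symm : X →L[ℝ] X)) J := by
  intro τ hτ
  have h1 : ContinuousAt Ring.inverse (D τ : X →L[ℝ] X) :=
    NormedRing.inverse_continuousAt (D τ).toUnit
  have h2 := ContinuousAt.comp_continuousWithinAt (f := fun t => (D t : X →L[ℝ] X)) h1 (hD τ hτ)
  have h3 : (Ring.inverse ∘ fun t => (D t : X →L[ℝ] X)) =
      fun t => ((D t).symm : X →L[ℝ] X) := by
    funext t
    simp [ContinuousLinearMap.ringInverse_equiv, ContinuousLinearMap.inverse_equiv]
  rwa [h3] at h2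

/-- Let `X` be a real Hilbert space, `I ⊆ ℝ` an interval, `U ⊆ I × X`
relatively open, `f : U → X` continuous and of class `C²` with respect to its second argument
(with partial derivatives `f'`, `f''`), and `φ` the general solution of `ẋ = f(t,x)`.  Let
`t₀, t₁ ∈ I`, `x ∈ X` with `(t₁,t₀,x) ∈ dom φ`, and set `F = φ(t₁,t₀,·)`, with first
derivative `F'(x) = D₃φ(t₁,t₀,x)` and second derivative `F''(x)`.  Then for every `h ∈ X`,
`F'(x)⁻¹ F''(x)h² = ∫_{t₀}^{t₁} D₃φ(τ,t₀,x)⁻¹ D₂²f(τ,φ(τ,t₀,x)) (D₃φ(τ,t₀,x)h)² dτ`. -/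
theorem stmt_14 {X : Type*} [NormedAddCommGroup X] [InnerProductSpace ℝ X] [CompleteSpace X]
    (I : Set ℝ) (hI : I.OrdConnected)
    (U : Set (ℝ × X)) (hU : ∃ W : Set (ℝ × X), IsOpen W ∧ U = W ∩ I ×ˢ (univ : Set X))
    (f : ℝ → X → X) (f' : ℝ → X → X →L[ℝ] X) (f'' : ℝ → X → X →L[ℝ] X →L[ℝ] X)
    (hfc : ContinuousOn (fun p : ℝ × X => f p.1 p.2) U)
    (hf'c : ContinuousOn (fun p : ℝ × X => f' p.1 p.2) U)
    (hf''c : ContinuousOn (fun p : ℝ × X => f'' p.1 p.2) U)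
    (hderiv : ∀ p ∈ U, HasFDerivAt (fun y => f p.1 y) (f' p.1 p.2) p.2)
    (hderiv2 : ∀ p ∈ U, HasFDerivAt (fun y => f' p.1 y) (f'' p.1 p.2) p.2)
    (t₀ t₁ : ℝ) (ht₀ : t₀ ∈ I) (ht₁ : t₁ ∈ I) (x : X)
    (O : Set X) (hO : IsOpen O) (hxO : x ∈ O)
    (φ : ℝ → ℝ → X → X)
    (hφ : ∀ y ∈ O, φ t₀ t₀ y = y ∧
      ∀ τ ∈ uIcc t₀ t₁, (τ, φ τ t₀ y) ∈ U ∧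
        HasDerivWithinAt (fun s => φ s t₀ y) (f τ (φ τ t₀ y)) (uIcc t₀ t₁) τ)
    (Dφ : ℝ → (X ≃L[ℝ] X))
    (hDφ : ∀ τ ∈ uIcc t₀ t₁, HasFDerivAt (fun y => φ τ t₀ y) (Dφ τ : X →L[ℝ] X) x)
    (F'' : X →L[ℝ] X →L[ℝ] X)
    (hF'' : HasFDerivAt (fun y => fderiv ℝ (fun z => φ t₁ t₀ z) y) F'' x) :
    ∀ h : X, (Dφ t₁).symm (F'' h h) =
      ∫ τ in t₀..t₁, (Dφ τ).symm (f'' τ (φ τ t₀ x) (Dφ τ h) (Dφ τ h)) := by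
  by_cases hsing : Subsingleton X
  · intro h
    exact Subsingleton.elim _ _
  have hnt : Nontrivial X := not_subsingleton_iff_nontrivial.1 hsing
  have hJI : uIcc t₀ t₁ ⊆ I := hI.uIcc_subset ht₀ ht₁
  have hφc : ∀ y ∈ O, ContinuousOn (fun τ => φ τ t₀ y) (uIcc t₀ t₁) := fun y hy τ hτ =>
    ((hφ y hy).2 τ hτ).2.continuousWithinAt
  have hinterior : ∀ {g : ℝ → X} {g' : X} {τ : ℝ}, τ ∈ Ioo (min t₀ t₁) (max t₀ t₁) →
      HasDerivWithinAt g g' (uIcc t₀ t₁) τ → HasDerivAt g g' τ := fun hτ hg =>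
    hg.hasDerivAt (Icc_mem_nhds hτ.1 hτ.2)
  obtain ⟨δ, hδ, M, hM, htube⟩ := aux_tube I U hU f' f'' hf'c hf''c (uIcc t₀ t₁) isCompact_uIcc hJI
    (fun τ => φ τ t₀ x) (hφc x hxO) (fun τ hτ => ((hφ x hxO).2 τ hτ).1)
  have hlip := fun τ (hτ : τ ∈ uIcc t₀ t₁) => aux_lip (f τ) (f' τ) (f'' τ) (φ τ t₀ x) δ M hM
    (fun y hy => hderiv _ (htube τ hτ y hy).1) (fun y hy => hderiv2 _ (htube τ hτ y hy).1)
    (fun y hy => (htube τ hτ y hy).2.1) (fun y hy => (htube τ hτ y hy).2.2)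
  set K := Real.exp (M * |t₁ - t₀| + 1) with hK
  have hK0 : 0 < K := Real.exp_pos _
  have hwd : ∀ y ∈ O, ∀ τ ∈ uIcc t₀ t₁, HasDerivWithinAt (fun s => φ s t₀ y - φ s t₀ x)
      (f τ (φ τ t₀ y) - f τ (φ τ t₀ x)) (uIcc t₀ t₁) τ := fun y hy τ hτ =>
    ((hφ y hy).2 τ hτ).2.sub ((hφ x hxO).2 τ hτ).2
  have hev : ∀ᶠ y in 𝓝 x, y ∈ O ∧ ∀ τ ∈ uIcc t₀ t₁, ‖φ τ t₀ y - φ τ t₀ x‖ < δ ∧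
      ‖φ τ t₀ y - φ τ t₀ x‖ ≤ K * ‖y - x‖ := by
    filter_upwards [hO.mem_nhds hxO, Metric.ball_mem_nhds x (div_pos hδ hK0)] with y hyO hy
    refine ⟨hyO, ?_⟩
    by_cases hyx : y = x
    · subst hyx
      simpa using fun τ _ => hδ
    rw [mem_ball_iff_norm, lt_div_iff₀ hK0] at hy
    have e0 : φ t₀ t₀ y - φ t₀ t₀ x = y - x := by rw [(hφ y hyO).1, (hφ x hxO).1]
    have key := aux_bound t₀ t₁ (fun s => φ s t₀ y - φ s t₀ x)
      (fun τ => f τ (φ τ t₀ y) - f τ (φ τ t₀ x)) δ M hM (hwd y hyO)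
      (fun τ hτ hb => (hlip τ hτ _ hb).1) (by simpa only [e0] using sub_ne_zero.2 hyx)
      (by simpa only [e0] using hy)
    simp only [e0] at key
    intro τ hτ
    refine ⟨(key τ hτ).trans_lt ?_, key τ hτ⟩
    rw [mul_comm]
    exact hy
  -- continuity of `Dφ`
  have hDLip : ∀ T ∈ uIcc t₀ t₁, ∀ S ∈ uIcc t₀ t₁,
      ‖(Dφ T : X →L[ℝ] X) - (Dφ S : X →L[ℝ] X)‖ ≤ M * K * |T - S| := by
    intro T hT S hS
    refine ((hDφ T hT).sub (hDφ S hS)).le_of_lip' (by positivity) ?_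
    filter_upwards [hev] with y hy
    have := (convex_uIcc t₀ t₁).norm_image_sub_le_of_norm_hasDerivWithin_le
      (C := M * (K * ‖y - x‖)) (hwd y hy.1) (fun τ hτ =>
      (hlip τ hτ _ (hy.2 τ hτ).1).1.trans (by gcongr; exact (hy.2 τ hτ).2)) hS hT
    rw [Real.norm_eq_abs] at this
    calc _ = ‖(φ T t₀ y - φ T t₀ x) - (φ S t₀ y - φ S t₀ x)‖ := by
          congr 1
          simp only [Pi.sub_apply]
          abel
      _ ≤ _ := this
      _ = _ := by ring
  have hDc : ContinuousOn (fun τ => (Dφ τ : X →L[ℝ] X)) (uIcc t₀ t₁) := by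
    have : LipschitzOnWith (Real.toNNReal (M * K)) (fun τ => (Dφ τ : X →L[ℝ] X)) (uIcc t₀ t₁) := by
      refine LipschitzOnWith.of_dist_le_mul fun T hT S hS => ?_
      rw [dist_eq_norm, Real.dist_eq, Real.coe_toNNReal _ (by positivity)]
      exact hDLip T hT S hS
    exact this.continuousOn
  have hcurve : ∀ y ∈ O, ContinuousOn (fun τ => (τ, φ τ t₀ y)) (uIcc t₀ t₁) := fun y hy =>
    continuousOn_id.prodMk (hφc y hy)
  have hfcu : ∀ y ∈ O, ContinuousOn (fun τ => f τ (φ τ t₀ y)) (uIcc t₀ t₁) := fun y hy =>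
    hfc.comp (hcurve y hy) (fun τ hτ => ((hφ y hy).2 τ hτ).1)
  have hAc : ContinuousOn (fun τ => f' τ (φ τ t₀ x)) (uIcc t₀ t₁) :=
    hf'c.comp (hcurve x hxO) (fun τ hτ => ((hφ x hxO).2 τ hτ).1)
  have hADc : ContinuousOn (fun τ => f' τ (φ τ t₀ x) ∘L (Dφ τ : X →L[ℝ] X)) (uIcc t₀ t₁) :=
    hAc.clm_comp hDc
  have hevs : ∀ h : X, ∀ᶠ s : ℝ in 𝓝[≠] 0, x + s • h ∈ O ∧ ∀ τ ∈ uIcc t₀ t₁,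
      ‖φ τ t₀ (x + s • h) - φ τ t₀ x‖ < δ ∧
      ‖φ τ t₀ (x + s • h) - φ τ t₀ x‖ ≤ K * (|s| * ‖h‖) := by
    intro h
    have hc : ContinuousAt (fun s : ℝ => x + s • h) 0 := by fun_prop
    have ht : Tendsto (fun s : ℝ => x + s • h) (𝓝[≠] 0) (𝓝 x) := by
      have : Tendsto (fun s : ℝ => x + s • h) (𝓝 0) (𝓝 x) := by simpa [ContinuousAt] using hc
      exact this.mono_left nhdsWithin_le_nhds
    filter_upwards [ht.eventually hev] with s hs
    simpa [norm_smul] using hs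
  -- the variational equation
  have hvar : ∀ T ∈ uIcc t₀ t₁, ∀ h : X,
      Dφ T h = h + ∫ σ in t₀..T, f' σ (φ σ t₀ x) (Dφ σ h) := by
    intro T hT h
    have L1 := aux_slope (fun y => φ T t₀ y) _ x (hDφ T hT) h
    have L2 := aux_dct t₀ t₁ (𝓝[≠] 0)
      (fun s σ => s⁻¹ • (f σ (φ σ t₀ (x + s • h)) - f σ (φ σ t₀ x)))
      (fun σ => f' σ (φ σ t₀ x) (Dφ σ h)) (M * (K * ‖h‖))
      (by
        filter_upwards [hevs h] with s hs
        exact ((hfcu _ hs.1).sub (hfcu x hxO)).const_smul _)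
      (by
        filter_upwards [hevs h, self_mem_nhdsWithin] with s hs hs0 τ hτ
        have hs0' : 0 < |s| := abs_pos.2 hs0
        rw [norm_smul, norm_inv, Real.norm_eq_abs, inv_mul_le_iff₀ hs0']
        calc _ ≤ M * ‖φ τ t₀ (x + s • h) - φ τ t₀ x‖ := (hlip τ hτ _ (hs.2 τ hτ).1).1
          _ ≤ M * (K * (|s| * ‖h‖)) := by gcongr; exact (hs.2 τ hτ).2
          _ = _ := by ring)
      (by
        intro τ hτ
        have h1 := hderiv _ ((hφ x hxO).2 τ hτ).1
        have h2 := HasFDerivAt.comp (f := fun y => φ τ t₀ y) x h1 (hDφ τ hτ)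
        exact aux_slope _ _ x h2 h) T hT
    refine tendsto_nhds_unique L1 ((L2.const_add h).congr' ?_)
    filter_upwards [hevs h, self_mem_nhdsWithin] with s hs hs0
    have e := aux_ftc t₀ t₁ (fun τ => s⁻¹ • (φ τ t₀ (x + s • h) - φ τ t₀ x))
      (fun σ => s⁻¹ • (f σ (φ σ t₀ (x + s • h)) - f σ (φ σ t₀ x)))
      (((hφc _ hs.1).sub (hφc x hxO)).const_smul _)
      (fun τ hτ => (hinterior hτ (hwd _ hs.1 τ (Ioo_subset_Icc_self hτ))).const_smul _)
      (((hfcu _ hs.1).sub (hfcu x hxO)).const_smul _) T hT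
    rw [e, (hφ _ hs.1).1, (hφ x hxO).1, add_sub_cancel_left, inv_smul_smul₀ hs0]
    abel
  have hvar' : ∀ T ∈ uIcc t₀ t₁, (Dφ T : X →L[ℝ] X) = ContinuousLinearMap.id ℝ X +
      ∫ σ in t₀..T, f' σ (φ σ t₀ x) ∘L (Dφ σ : X →L[ℝ] X) := by
    intro T hT
    ext h
    have := ContinuousLinearMap.intervalIntegral_apply (μ := MeasureTheory.volume)
      (hADc.mono (aux_sub hT)).intervalIntegrable h
    rw [add_apply, this]
    simpa using hvar T hT h
  have hDd : ∀ τ ∈ Ioo (min t₀ t₁) (max t₀ t₁), HasDerivAt (fun τ => (Dφ τ : X →L[ℝ] X))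
      (f' τ (φ τ t₀ x) ∘L (Dφ τ : X →L[ℝ] X)) τ := by
    intro τ hτ
    have hn : uIcc t₀ t₁ ∈ 𝓝 τ := Icc_mem_nhds hτ.1 hτ.2
    have hτJ : τ ∈ uIcc t₀ t₁ := Ioo_subset_Icc_self hτ
    have h1 := integral_hasDerivAt_right (hADc.mono (aux_sub hτJ)).intervalIntegrable
      ((hADc.mono Ioo_subset_Icc_self).stronglyMeasurableAtFilter isOpen_Ioo τ hτ)
      (hADc.continuousAt hn)
    refine (h1.const_add (ContinuousLinearMap.id ℝ X)).congr_of_eventuallyEq ?_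
    filter_upwards [hn] with T hT using hvar' T hT
  have hΨc := aux_inv_cont Dφ (uIcc t₀ t₁) hDc
  have hΨd := fun τ hτ => aux_inv Dφ (f' τ (φ τ t₀ x)) τ (hDd τ hτ)
  obtain ⟨C, hC⟩ := isCompact_uIcc.exists_bound_of_continuousOn hΨc
  have hC0 : 0 ≤ C := (norm_nonneg _).trans (hC t₀ left_mem_uIcc)
  -- `F` is differentiable near `x`
  have hF1 : fderiv ℝ (fun z => φ t₁ t₀ z) x = (Dφ t₁ : X →L[ℝ] X) :=
    (hDφ t₁ right_mem_uIcc).fderiv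
  have hFne : fderiv ℝ (fun z => φ t₁ t₀ z) x ≠ 0 := by
    rw [hF1]
    intro h0
    obtain ⟨v, hv⟩ := exists_ne (0 : X)
    apply hv
    apply (Dφ t₁).injective
    rw [map_zero]
    exact congrArg (fun L : X →L[ℝ] X => L v) h0
  have hFev : ∀ᶠ y in 𝓝 x, HasFDerivAt (fun z => φ t₁ t₀ z)
      (fderiv ℝ (fun z => φ t₁ t₀ z) y) y := by
    filter_upwards [hF''.continuousAt.eventually_ne hFne] with y hy
    by_contra hn
    exact hy (fderiv_zero_of_not_differentiableAt fun hd => hn hd.hasFDerivAt)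
  intro h
  have hz : Tendsto (fun s : ℝ => s⁻¹ • ((x + s • h) - x)) (𝓝[≠] 0) (𝓝 h) := by
    refine tendsto_const_nhds.congr' ?_
    filter_upwards [self_mem_nhdsWithin] with s hs
    rw [add_sub_cancel_left, inv_smul_smul₀ hs]
  have L1 := ((Dφ t₁).symm.continuous.tendsto _).comp
    (aux_limit (fun z => φ t₁ t₀ z) _ F'' x hFev hF'' (fun s => x + s • h) h hz)
  have hrc : ∀ y ∈ O, ContinuousOn (fun τ => f τ (φ τ t₀ y) - f τ (φ τ t₀ x)
      - f' τ (φ τ t₀ x) (φ τ t₀ y - φ τ t₀ x)) (uIcc t₀ t₁) := fun y hy =>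
    ((hfcu y hy).sub (hfcu x hxO)).sub (hAc.clm_apply ((hφc y hy).sub (hφc x hxO)))
  have L2 := aux_dct t₀ t₁ (𝓝[≠] 0)
    (fun s τ => (Dφ τ).symm ((s ^ 2)⁻¹ • (f τ (φ τ t₀ (x + s • h)) - f τ (φ τ t₀ x)
      - f' τ (φ τ t₀ x) (φ τ t₀ (x + s • h) - φ τ t₀ x))))
    (fun τ => (Dφ τ).symm ((1/2 : ℝ) • f'' τ (φ τ t₀ x) (Dφ τ h) (Dφ τ h)))
    (C * (M * (K * ‖h‖) ^ 2))
    (by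
      filter_upwards [hevs h] with s hs
      exact hΨc.clm_apply ((hrc _ hs.1).const_smul _))
    (by
      filter_upwards [hevs h, self_mem_nhdsWithin] with s hs hs0 τ hτ
      have hs0' : 0 < |s| := abs_pos.2 hs0
      refine (((Dφ τ).symm : X →L[ℝ] X).le_of_opNorm_le_of_le (hC τ hτ) ?_)
      rw [norm_smul, norm_inv, norm_pow, Real.norm_eq_abs, inv_mul_le_iff₀ (by positivity)]
      calc _ ≤ M * ‖φ τ t₀ (x + s • h) - φ τ t₀ x‖ ^ 2 := (hlip τ hτ _ (hs.2 τ hτ).1).2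
        _ ≤ M * (K * (|s| * ‖h‖)) ^ 2 := by gcongr; exact (hs.2 τ hτ).2
        _ = _ := by ring)
    (by
      intro τ hτ
      refine ((Dφ τ).symm.continuous.tendsto _).comp ?_
      refine aux_limit (f τ) (f' τ) _ (φ τ t₀ x) ?_ (hderiv2 _ ((hφ x hxO).2 τ hτ).1)
        (fun s => φ τ t₀ (x + s • h)) (Dφ τ h) (aux_slope (fun y => φ τ t₀ y) _ x (hDφ τ hτ) h)
      filter_upwards [Metric.ball_mem_nhds (φ τ t₀ x) hδ] with y hy
      exact hderiv _ (htube τ hτ y (mem_ball_iff_norm.1 hy)).1) t₁ right_mem_uIcc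
  have hD0 : ∀ v, Dφ t₀ v = v := fun v => by simpa using hvar t₀ left_mem_uIcc v
  have heq := tendsto_nhds_unique L1 (L2.congr' (by
    filter_upwards [hevs h] with s hs
    have e := aux_ftc t₀ t₁
      (fun τ => (s ^ 2)⁻¹ • (((Dφ τ).symm : X →L[ℝ] X) (φ τ t₀ (x + s • h) - φ τ t₀ x)))
      (fun τ => (Dφ τ).symm ((s ^ 2)⁻¹ • (f τ (φ τ t₀ (x + s • h)) - f τ (φ τ t₀ x)
        - f' τ (φ τ t₀ x) (φ τ t₀ (x + s • h) - φ τ t₀ x))))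
      ((hΨc.clm_apply ((hφc _ hs.1).sub (hφc x hxO))).const_smul _)
      (fun τ hτ => by
        have := ((hΨd τ hτ).clm_apply
          (hinterior hτ (hwd _ hs.1 τ (Ioo_subset_Icc_self hτ)))).const_smul ((s ^ 2)⁻¹)
        refine this.congr_deriv ?_
        generalize φ τ t₀ (x + s • h) - φ τ t₀ x = w
        generalize f τ (φ τ t₀ (x + s • h)) - f τ (φ τ t₀ x) = q
        rw [neg_apply, ContinuousLinearMap.comp_apply, map_smul, map_sub]
        simp only [ContinuousLinearEquiv.coe_coe]
        congr 1
        abel)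
      (hΨc.clm_apply ((hrc _ hs.1).const_smul _)) t₁ right_mem_uIcc
    rw [e, (hφ _ hs.1).1, (hφ x hxO).1, hF1]
    have e0 : (Dφ t₀).symm h = h := by
      rw [ContinuousLinearEquiv.symm_apply_eq, hD0]
    simp only [Function.comp_apply, ContinuousLinearEquiv.coe_coe, add_sub_cancel_left, e0,
      map_smul, map_sub, ContinuousLinearEquiv.symm_apply_apply, smul_sub] ))
  simp only [map_smul, integral_smul] at heq
  exact smul_right_injective X (by norm_num : (1/2 : ℝ) ≠ 0) heq
end

section
/- Let X be a real Hilbert space, t₀ ≤ t₁ real numbers, A : [t₀,t₁] → 𝓛(X,X) continuous, and Φ : [t₀,t₁] → 𝓛(X,X) the operator solution of Φ'(τ) = A(τ)∘Φ(τ) with Φ(t₀) = id, each Φ(τ) being invertible. If M₁ ∈ ℝ satisfies M₁ ≥ 2μ₊(A(τ)) − μ₋(A(τ)) for all τ ∈ [t₀,t₁], then ∫_{t₀}^{t₁} ‖Φ(τ)⁻¹‖·‖Φ(τ)‖² dτ ≤ K(M₁), where K(α) = t₁−t₀ if α = 0 and K(α) = (exp(α(t₁−t₀))−1)/α otherwise,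 and ‖·‖ is the operator norm. -/
open Set RealInnerProductSpace intervalIntegral

lemma mu_bddAux {X : Type*} [NormedAddCommGroup X] [InnerProductSpace ℝ X]
    (A : X →L[ℝ] X) (y : X) (hy : ‖y‖ = 1) : |⟪A y, y⟫| ≤ ‖A‖ := by
  have h1 := abs_real_inner_le_norm (A y) y
  have h2 := A.le_opNorm y
  rw [hy] at h1 h2
  linarith

lemma le_muPlus_aux {X : Type*} [NormedAddCommGroup X] [InnerProductSpace ℝ X]
    (A : X →L[ℝ] X) (u : X) (hu : u ≠ 0) : ⟪A u, u⟫ / ⟪u, u⟫ ≤ muPlus A := by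
  have hn : ‖u‖ ≠ 0 := norm_ne_zero_iff.2 hu
  apply le_csSup
  · refine ⟨‖A‖, ?_⟩
    rintro c ⟨y, hy, rfl⟩
    exact (abs_le.1 (mu_bddAux A y hy)).2
  · refine ⟨‖u‖⁻¹ • u, ?_, ?_⟩
    · rw [norm_smul, norm_inv, norm_norm, inv_mul_cancel₀ hn]
    · rw [map_smul, real_inner_smul_left, real_inner_smul_right, real_inner_self_eq_norm_sq]
      field_simp

lemma muMinus_le_aux {X : Type*} [NormedAddCommGroup X] [InnerProductSpace ℝ X]
    (A : X →L[ℝ] X) (u : X) (hu : u ≠ 0) : muMinus A ≤ ⟪A u, u⟫ / ⟪u, u⟫ := by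
  have hn : ‖u‖ ≠ 0 := norm_ne_zero_iff.2 hu
  apply csInf_le
  · refine ⟨-‖A‖, ?_⟩
    rintro c ⟨y, hy, rfl⟩
    exact (abs_le.1 (mu_bddAux A y hy)).1
  · refine ⟨‖u‖⁻¹ • u, ?_, ?_⟩
    · rw [norm_smul, norm_inv, norm_norm, inv_mul_cancel₀ hn]
    · rw [map_smul, real_inner_smul_left, real_inner_smul_right, real_inner_self_eq_norm_sq]
      field_simp

/-- Vector form of the combined Ważewski estimate. -/
lemma wazewski_aux {X : Type*} [NormedAddCommGroup X] [InnerProductSpace ℝ X]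
    (t₀ t₁ : ℝ)
    (A : ℝ → X →L[ℝ] X)
    (Φ : ℝ → (X ≃L[ℝ] X))
    (hΦ0 : Φ t₀ = ContinuousLinearEquiv.refl ℝ X)
    (hΦ : ∀ τ ∈ Icc t₀ t₁, HasDerivWithinAt (fun s => (Φ s : X →L[ℝ] X))
      ((A τ).comp (Φ τ : X →L[ℝ] X)) (Icc t₀ t₁) τ)
    (M₁ : ℝ) (hM₁ : ∀ τ ∈ Icc t₀ t₁, 2 * muPlus (A τ) - muMinus (A τ) ≤ M₁)
    (τ : ℝ) (hτ : τ ∈ Icc t₀ t₁) (x z : X) (hx : x ≠ 0) (hz : z ≠ 0) :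
    ‖Φ τ x‖ ^ 2 * ‖z‖ ≤ Real.exp (M₁ * (τ - t₀)) * ‖x‖ ^ 2 * ‖Φ τ z‖ := by
  have hne : ∀ s (y : X), y ≠ 0 → Φ s y ≠ 0 := fun s y hy => by simpa using hy
  have hl : ∀ y : X, y ≠ 0 → ∀ s ∈ Icc t₀ t₁,
      HasDerivWithinAt (fun s => Real.log ⟪Φ s y, Φ s y⟫)
        (2 * (⟪A s (Φ s y), Φ s y⟫ / ⟪Φ s y, Φ s y⟫)) (Icc t₀ t₁) s := by
    intro y hy s hs
    have h1 : HasDerivWithinAt (fun s => Φ s y) (A s (Φ s y)) (Icc t₀ t₁) s := by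
      simpa using (hΦ s hs).clm_apply (hasDerivWithinAt_const s (Icc t₀ t₁) y)
    have h2 := (h1.inner ℝ h1).log (inner_self_ne_zero.2 (hne s y hy))
    convert h2 using 1
    rw [real_inner_comm (A s (Φ s y))]
    ring
  set h : ℝ → ℝ := fun s => Real.log ⟪Φ s x, Φ s x⟫ - 1 / 2 * Real.log ⟪Φ s z, Φ s z⟫
    - M₁ * (s - t₀) with hh
  have hd : ∀ s ∈ Icc t₀ t₁, HasDerivWithinAt h
      (2 * (⟪A s (Φ s x), Φ s x⟫ / ⟪Φ s x, Φ s x⟫)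
        - 1 / 2 * (2 * (⟪A s (Φ s z), Φ s z⟫ / ⟪Φ s z, Φ s z⟫)) - M₁ * 1) (Icc t₀ t₁) s := by
    intro s hs
    exact ((hl x hx s hs).sub ((hl z hz s hs).const_mul _)).sub
      (((hasDerivWithinAt_id s _).sub_const t₀).const_mul M₁)
  have hanti : AntitoneOn h (Icc t₀ t₁) := by
    apply antitoneOn_of_hasDerivWithinAt_nonpos (convex_Icc _ _)
      (fun s hs => (hd s hs).continuousWithinAt)
      (fun s hs => (hd s (interior_subset hs)).mono interior_subset)
    intro s hs
    have h1 := le_muPlus_aux (A s) _ (hne s x hx)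
    have h2 := muMinus_le_aux (A s) _ (hne s z hz)
    have h3 := hM₁ s (interior_subset hs)
    linarith
  have hfin := hanti (left_mem_Icc.2 (hτ.1.trans hτ.2)) hτ hτ.1
  simp only [hh, hΦ0, ContinuousLinearEquiv.refl_apply, real_inner_self_eq_norm_sq, Real.log_pow,
    sub_self, mul_zero] at hfin
  have p1 : 0 < ‖x‖ := norm_pos_iff.2 hx
  have p2 : 0 < ‖z‖ := norm_pos_iff.2 hz
  have p3 : 0 < ‖Φ τ x‖ := norm_pos_iff.2 (hne τ x hx)
  have p4 : 0 < ‖Φ τ z‖ := norm_pos_iff.2 (hne τ z hz)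
  rw [← Real.log_le_log_iff (by positivity) (by positivity), Real.log_mul (by positivity)
    (by positivity), Real.log_mul (by positivity) (by positivity), Real.log_mul (by positivity)
    (by positivity), Real.log_exp, Real.log_pow, Real.log_pow]
  push_cast at hfin ⊢
  linarith

lemma opNorm_aux {X : Type*} [NormedAddCommGroup X] [InnerProductSpace ℝ X]
    (F G : X →L[ℝ] X) (E : ℝ) (hE : 0 ≤ E)
    (h : ∀ x w : X, ‖F x‖ ^ 2 * ‖G w‖ ≤ E * ‖x‖ ^ 2 * ‖w‖) : ‖G‖ * ‖F‖ ^ 2 ≤ E := by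
  have h1 : ∀ x : X, ‖F x‖ ^ 2 * ‖G‖ ≤ E * ‖x‖ ^ 2 := by
    intro x
    have := ContinuousLinearMap.opNorm_le_bound ((‖F x‖ ^ 2) • G) (M := E * ‖x‖ ^ 2)
      (by positivity) (fun w => by simpa [norm_smul] using h x w)
    simpa [norm_smul] using this
  have h2 : ‖Real.sqrt ‖G‖ • F‖ ≤ Real.sqrt E := by
    apply ContinuousLinearMap.opNorm_le_bound _ (Real.sqrt_nonneg _)
    intro x
    refine (pow_le_pow_iff_left₀ (by positivity) (by positivity) two_ne_zero).1 ?_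
    have := h1 x
    rw [ContinuousLinearMap.smul_apply, norm_smul, Real.norm_of_nonneg (Real.sqrt_nonneg _),
      mul_pow, mul_pow, Real.sq_sqrt (norm_nonneg _), Real.sq_sqrt hE]
    linarith
  rw [norm_smul, Real.norm_of_nonneg (Real.sqrt_nonneg _)] at h2
  have h3 := pow_le_pow_left₀ (by positivity) h2 2
  rwa [mul_pow, Real.sq_sqrt (norm_nonneg _), Real.sq_sqrt hE] at h3

/-- Let `X` be a real Hilbert space, `t₀ ≤ t₁`, `A : [t₀,t₁] → 𝓛(X,X)`
continuous, and `Φ : [t₀,t₁] → 𝓛(X,X)` the (invertible) operator solution of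
`Φ' = A∘Φ`, `Φ(t₀) = id`.  If `M₁ ≥ 2μ₊(A(τ)) − μ₋(A(τ))` on `[t₀,t₁]`, then
`∫_{t₀}^{t₁} ‖Φ(τ)⁻¹‖·‖Φ(τ)‖² dτ ≤ K(M₁)`, where `K(α) = t₁−t₀` for `α = 0` and
`K(α) = (exp(α(t₁−t₀))−1)/α` otherwise. -/
theorem stmt_15 {X : Type*} [NormedAddCommGroup X] [InnerProductSpace ℝ X] [CompleteSpace X]
    (t₀ t₁ : ℝ) (ht : t₀ ≤ t₁)
    (A : ℝ → X →L[ℝ] X) (hA : ContinuousOn A (Icc t₀ t₁))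
    (Φ : ℝ → (X ≃L[ℝ] X))
    (hΦ0 : Φ t₀ = ContinuousLinearEquiv.refl ℝ X)
    (hΦ : ∀ τ ∈ Icc t₀ t₁, HasDerivWithinAt (fun s => (Φ s : X →L[ℝ] X))
      ((A τ).comp (Φ τ : X →L[ℝ] X)) (Icc t₀ t₁) τ)
    (M₁ : ℝ) (hM₁ : ∀ τ ∈ Icc t₀ t₁, 2 * muPlus (A τ) - muMinus (A τ) ≤ M₁)
    (K : ℝ → ℝ)
    (hK : ∀ α : ℝ, K α = if α = 0 then t₁ - t₀ else (Real.exp (α * (t₁ - t₀)) - 1) / α) :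
    (∫ τ in t₀..t₁, ‖((Φ τ).symm : X →L[ℝ] X)‖ * ‖(Φ τ : X →L[ℝ] X)‖ ^ 2) ≤ K M₁ := by
  have hpt : ∀ τ ∈ Icc t₀ t₁, ‖((Φ τ).symm : X →L[ℝ] X)‖ * ‖(Φ τ : X →L[ℝ] X)‖ ^ 2
      ≤ Real.exp (M₁ * (τ - t₀)) := by
    intro τ hτ
    apply opNorm_aux _ _ _ (Real.exp_pos _).le
    intro x w
    by_cases hx : x = 0
    · simp [hx]
    by_cases hw : w = 0
    · simp [hw]
    have := wazewski_aux t₀ t₁ A Φ hΦ0 hΦ M₁ hM₁ τ hτ x ((Φ τ).symm w) hx (by simpa using hw)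
    simpa using this
  have hint : (∫ τ in t₀..t₁, Real.exp (M₁ * (τ - t₀))) = K M₁ := by
    rw [hK]
    split_ifs with h0
    · simp [h0]
    · have hd : ∀ s ∈ uIcc t₀ t₁, HasDerivAt (fun s => Real.exp (M₁ * (s - t₀)) / M₁)
          (Real.exp (M₁ * (s - t₀))) s := by
        intro s _
        have := ((((hasDerivAt_id s).sub_const t₀).const_mul M₁).exp).div_const M₁
        simpa [h0] using this
      rw [integral_eq_sub_of_hasDerivAt hd (Continuous.intervalIntegrable (by fun_prop) _ _)]
      simp
      ring
  rw [← hint, integral_of_le ht, integral_of_le ht]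
  apply MeasureTheory.integral_mono_of_nonneg
  · exact Filter.Eventually.of_forall fun τ => by positivity
  · have hc : Continuous fun τ : ℝ => Real.exp (M₁ * (τ - t₀)) := by fun_prop
    exact (hc.intervalIntegrable t₀ t₁).1
  · filter_upwards [MeasureTheory.ae_restrict_mem measurableSet_Ioc] with τ hτ
    exact hpt τ (Ioc_subset_Icc_self hτ)
end

section
/- For all real α ≥ 1 and all x ∈ [0,1], (1 − (5/3)·x·exp(−α)) ≥ (1 − x/(α² + 1))^{3/2}. -/
/-- For all real `α ≥ 1` and all `x ∈ [0,1]`,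
`1 - (5/3)·x·exp(-α) ≥ (1 - x/(α² + 1))^(3/2)`. -/
theorem stmt_17 (α : ℝ) (hα : 1 ≤ α) (x : ℝ) (hx : x ∈ Set.Icc (0:ℝ) 1) :
    (1 - x / (α ^ 2 + 1)) ^ ((3:ℝ) / 2) ≤ 1 - (5 / 3) * x * Real.exp (-α) := by
  obtain ⟨hx0, hx1⟩ := hx
  have hq : (2:ℝ) ≤ α ^ 2 + 1 := by nlinarith
  have hq0 : (0:ℝ) < α ^ 2 + 1 := by linarith
  have hexp : 1.35 * (α ^ 2 + 1) ≤ Real.exp α := by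
    have h1 := Real.quadratic_le_exp_of_nonneg (x := α - 1) (by linarith)
    have h2 := Real.exp_one_gt_d9
    have h3 : Real.exp α = Real.exp 1 * Real.exp (α - 1) := by
      rw [← Real.exp_add]; congr 1; ring
    rw [h3]
    have h4 : (2.7:ℝ) * (1 + (α - 1) + (α - 1) ^ 2 / 2) ≤ Real.exp 1 * Real.exp (α - 1) :=
      mul_le_mul (by linarith) h1 (by nlinarith) (Real.exp_pos 1).le
    nlinarith
  have hneg : Real.exp (-α) ≤ (1 / 1.35) * (1 / (α ^ 2 + 1)) := by
    have h := inv_anti₀ (by positivity) hexp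
    rw [Real.exp_neg]
    calc (Real.exp α)⁻¹ ≤ _ := h
      _ = _ := by rw [mul_inv, one_div, one_div]
  set u := x / (α ^ 2 + 1) with hu
  have hu0 : 0 ≤ u := by positivity
  have hu1 : u ≤ 1 / 2 := by
    rw [hu, div_le_iff₀ hq0]; linarith
  have hR : (5 / 3) * x * Real.exp (-α) ≤ 1.28 * u := by
    have h5 : x * Real.exp (-α) ≤ x * ((1 / 1.35) * (1 / (α ^ 2 + 1))) :=
      mul_le_mul_of_nonneg_left hneg hx0
    have h6 : x * ((1 / 1.35) * (1 / (α ^ 2 + 1))) = (1 / 1.35) * u := by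
      rw [hu]; ring
    rw [h6] at h5
    norm_num at h5 ⊢
    linarith
  have hL : (1 - u) ^ ((3:ℝ) / 2) ≤ 1 - 1.28 * u := by
    have h7 : (1 - u) ^ ((3:ℝ) / 2) = (1 - u) * Real.sqrt (1 - u) := by
      rw [show (3:ℝ) / 2 = 1 + 1 / 2 by norm_num, Real.rpow_add (by linarith), Real.rpow_one,
        Real.sqrt_eq_rpow]
    have h8 : Real.sqrt (1 - u) ≤ 1 - u / 2 - u ^ 2 / 8 := by
      apply Real.sqrt_le_iff.mpr
      constructor
      · nlinarith
      · have : 0 ≤ u ^ 3 := by positivity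
        have : 0 ≤ u ^ 4 := by positivity
        nlinarith
    rw [h7]
    have h9 := mul_le_mul_of_nonneg_left h8 (show 0 ≤ 1 - u by linarith)
    have h10 : 0 ≤ u * (1 / 2 - u) := mul_nonneg hu0 (by linarith)
    have h11 : 0 ≤ u * (u * (1 / 2 - u)) := mul_nonneg hu0 h10
    norm_num
    nlinarith
  linarith
end

section
/- For all real α ≥ 1, (3/5)·exp(α)·(1 − α³/(α² + 1)^{3/2}) ≥ 1. -/
theorem stmt_18_aux (b : ℝ) (hb : 0 ≤ b) :
    2.718 * (1 + b + b ^ 2 / 2 + b ^ 3 / 6) ≤ Real.exp (1 + b) := by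
  rw [Real.exp_add]
  have h1 := Real.exp_one_gt_d9
  have h2 := Real.sum_le_exp_of_nonneg hb 4
  simp [Finset.sum_range_succ, Nat.factorial] at h2
  have h3 : 1 + b + b ^ 2 / 2 + b ^ 3 / 6 ≤ Real.exp b := by linarith
  exact mul_le_mul (by linarith) h3 (by positivity) (by positivity)

/-- For all real `α ≥ 1`, `(3/5)·exp(α)·(1 − α³/(α² + 1)^(3/2)) ≥ 1`. -/
theorem stmt_18 (α : ℝ) (hα : 1 ≤ α) :
    1 ≤ (3 / 5) * Real.exp α * (1 - α ^ 3 / (α ^ 2 + 1) ^ ((3:ℝ) / 2)) := by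
  obtain ⟨b, hb, rfl⟩ : ∃ b : ℝ, 0 ≤ b ∧ α = 1 + b := ⟨α - 1, by linarith, by ring⟩
  have he := stmt_18_aux b hb
  have hD2 : (2:ℝ) ≤ (1 + b) ^ 2 + 1 := by nlinarith
  obtain ⟨D, hD⟩ : ∃ D : ℝ, D = (1 + b) ^ 2 + 1 := ⟨_, rfl⟩
  rw [← hD] at hD2 ⊢
  have hD0 : 0 < D := by linarith
  have hpow : D ^ ((3:ℝ) / 2) = D * √D := by
    rw [Real.sqrt_eq_rpow, show (3:ℝ) / 2 = 1 + 1 / 2 by norm_num, Real.rpow_add hD0, Real.rpow_one]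
  have hs : 0 < √D := Real.sqrt_pos.mpr hD0
  have hP : 0 < 8 * D ^ 2 - 4 * D - 1 := by nlinarith
  have hQ : 0 < 12 * D ^ 2 - 3 * D - 1 := by nlinarith
  have hsq : (1 + b) * (8 * D ^ 2) ≤ (8 * D ^ 2 - 4 * D - 1) * √D := by
    refine (pow_le_pow_iff_left₀ (by positivity) (by positivity) two_ne_zero).mp ?_
    · rw [mul_pow, mul_pow _ (√D), Real.sq_sqrt hD0.le, show (1 + b) ^ 2 = D - 1 by linarith]
      nlinarith [pow_pos hD0 2, pow_pos hD0 3]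
  have hle : (1 + b) ^ 3 / (D * √D) ≤ 1 - (12 * D ^ 2 - 3 * D - 1) / (8 * D ^ 3) := by
    have : 1 - (12 * D ^ 2 - 3 * D - 1) / (8 * D ^ 3)
        = (D - 1) * (8 * D ^ 2 - 4 * D - 1) / (8 * D ^ 3) := by
      field_simp
      ring
    rw [this, div_le_div_iff₀ (by positivity) (by positivity)]
    have h3 : (1 + b) ^ 3 = (D - 1) * (1 + b) := by rw [hD]; ring
    rw [h3]
    have := mul_le_mul_of_nonneg_left hsq (show 0 ≤ (D - 1) * D by nlinarith)
    linarith
  rw [hpow]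
  have hpoly : 40 * D ^ 3 ≤
      2.718 * (1 + b + b ^ 2 / 2 + b ^ 3 / 6) * (3 * (12 * D ^ 2 - 3 * D - 1)) := by
    rw [hD]
    have h2 := pow_nonneg hb 2
    have h3 := pow_nonneg hb 3
    have h4 := pow_nonneg hb 4
    have h5 := pow_nonneg hb 5
    have h6 := pow_nonneg hb 6
    have h7 := pow_nonneg hb 7
    nlinarith [mul_nonneg hb (sq_nonneg (b - 1)), mul_nonneg h2 (sq_nonneg (b - 1)), sq_nonneg (b - 1)]
  calc (1:ℝ) ≤ (3 / 5) * Real.exp (1 + b) * ((12 * D ^ 2 - 3 * D - 1) / (8 * D ^ 3)) := by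
        have := mul_le_mul_of_nonneg_right he (show 0 ≤ 3 * (12 * D ^ 2 - 3 * D - 1) by linarith)
        rw [← mul_div_assoc, le_div_iff₀ (by positivity)]
        linarith
    _ ≤ _ := by
        apply mul_le_mul_of_nonneg_left _ (by positivity)
        linarith
end

section
/- Let X, Y be real Banach spaces, U ⊆ X and V ⊆ Y open, g : U → ℝ of class C^{1,1} on a neighborhood of x ∈ U, and F : U → V a C^{1,1}-diffeomorphism; set f = g ∘ F⁻¹ : V → ℝ. Then for every h ∈ ker g'(x): D̲²₊f(F(x),(F'(x)h)²) ≤ D̲²₊g(x,h²) − D̲²₊(y ↦ g'(x)(F'(x)⁻¹F(y)))(x,h²), and D̄²₊f(F(x),(F'(x)h)²) ≥ D̲²₊g(x,h²) − D̲²₊(y ↦ g'(x)(F'(x)⁻¹F(y)))(x,h²). -/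
open Filter Topology Metric

/-- Lower right generalized second-order directional derivative
`D̲²₊f(x,h,k) = liminf_{t↓0} (f'(x+th)k − f'(x)k)/t`. -/
noncomputable def lowD2p {X : Type*} [NormedAddCommGroup X] [NormedSpace ℝ X]
    (f : X → ℝ) (x h k : X) : ℝ :=
  liminf (fun t : ℝ => (fderiv ℝ f (x + t • h) k - fderiv ℝ f x k) / t) (𝓝[>] (0:ℝ))

/-- Upper right generalized second-order directional derivative
`D̄²₊f(x,h,k) = limsup_{t↓0} (f'(x+th)k − f'(x)k)/t`. -/
noncomputable def upD2p {X : Type*} [NormedAddCommGroup X] [NormedSpace ℝ X]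
    (f : X → ℝ) (x h k : X) : ℝ :=
  limsup (fun t : ℝ => (fderiv ℝ f (x + t • h) k - fderiv ℝ f x k) / t) (𝓝[>] (0:ℝ))

/-- `F : U → V` is a `C^{1,1}`-diffeomorphism with inverse `G`. -/
def IsC11DiffeoOn {X Y : Type*} [NormedAddCommGroup X] [NormedSpace ℝ X]
    [NormedAddCommGroup Y] [NormedSpace ℝ Y]
    (F : X → Y) (G : Y → X) (U : Set X) (V : Set Y) : Prop :=
  Set.MapsTo F U V ∧ Set.MapsTo G V U ∧
    (∀ x ∈ U, G (F x) = x) ∧ (∀ y ∈ V, F (G y) = y) ∧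
    ContDiffOn ℝ 1 F U ∧
    (∀ x ∈ U, ∃ ε > 0, ∃ L : NNReal,
      LipschitzOnWith L (fun y => fderiv ℝ F y) (ball x ε ∩ U)) ∧
    ContDiffOn ℝ 1 G V ∧
    (∀ y ∈ V, ∃ ε > 0, ∃ L : NNReal,
      LipschitzOnWith L (fun z => fderiv ℝ G z) (ball y ε ∩ V))

open Asymptotics in
/-- Liminf comparison for bounded real functions up to a vanishing error. -/
lemma real_liminf_aux {l : Filter ℝ} [NeBot l] (a b c : ℝ → ℝ)
    (ha : a =O[l] (fun _ => (1:ℝ))) (hb : b =O[l] (fun _ => (1:ℝ)))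
    (he : Tendsto (fun t => c t - (a t - b t)) l (𝓝 0)) :
    liminf c l ≤ liminf a l - liminf b l ∧ liminf a l - liminf b l ≤ limsup c l := by
  have key : ∀ u : ℝ → ℝ, u =O[l] (fun _ => (1:ℝ)) →
      IsBoundedUnder (· ≤ ·) l u ∧ IsBoundedUnder (· ≥ ·) l u := by
    intro u hu
    have := (isBigO_one_iff ℝ).1 hu
    have h2 : IsBoundedUnder (· ≤ ·) l (fun x => |u x|) := this
    exact isBoundedUnder_le_abs.1 h2
  set e : ℝ → ℝ := fun t => c t - (a t - b t) with hedef
  have heO : e =O[l] (fun _ => (1:ℝ)) := he.isBigO_one ℝ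
  have hcO : c =O[l] (fun _ => (1:ℝ)) := by
    have : c = fun t => e t + (a t - b t) := by funext t; simp [hedef]
    rw [this]; exact heO.add (ha.sub hb)
  have hneO : (-e) =O[l] (fun _ => (1:ℝ)) := heO.neg_left
  have hbe : ((-e) + b) =O[l] (fun _ => (1:ℝ)) := hneO.add hb
  have hne : Tendsto (-e) l (𝓝 0) := by
    have h0 := he.neg
    rw [neg_zero] at h0
    exact h0
  obtain ⟨c1, c2⟩ := key c hcO
  obtain ⟨b1, b2⟩ := key b hb
  obtain ⟨n1, n2⟩ := key _ hneO
  obtain ⟨d1, d2⟩ := key _ hbe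
  have e1 := le_liminf_add n2 n1 b2 b1.isCoboundedUnder_ge
  have e2 := liminf_add_le n2 n1 b2 b1.isCoboundedUnder_ge
  have e3 := le_liminf_add c2 c1 d2 d1.isCoboundedUnder_ge
  have e4 := liminf_add_le c2 c1 d2 d1.isCoboundedUnder_ge
  rw [hne.liminf_eq] at e1
  rw [hne.limsup_eq] at e2
  have hsum : c + (-e + b) = a := by
    funext t; simp only [hedef, Pi.add_apply, Pi.neg_apply]; ring
  rw [hsum] at e3 e4
  constructor <;> linarith

open Asymptotics in
lemma clm_bigO {E H : Type*} [NormedAddCommGroup E] [NormedSpace ℝ E]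
    [NormedAddCommGroup H] [NormedSpace ℝ H] {l : Filter ℝ} (T : ℝ → E →L[ℝ] H) (v : ℝ → E)
    {p q : ℝ → ℝ} (hT : T =O[l] p) (hv : v =O[l] q) :
    (fun t => T t (v t)) =O[l] (fun t => p t * q t) := by
  refine IsBigO.trans ?_ (hT.norm_left.mul hv.norm_left)
  refine IsBigO.of_bound 1 (Eventually.of_forall fun t => ?_)
  simpa using (T t).le_opNorm (v t)

open Asymptotics in
lemma clm_littleO_left {E H : Type*} [NormedAddCommGroup E] [NormedSpace ℝ E]
    [NormedAddCommGroup H] [NormedSpace ℝ H] {l : Filter ℝ} (T : ℝ → E →L[ℝ] H) (v : ℝ → E)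
    {p q : ℝ → ℝ} (hT : T =o[l] p) (hv : v =O[l] q) :
    (fun t => T t (v t)) =o[l] (fun t => p t * q t) := by
  refine IsBigO.trans_isLittleO ?_ (hT.norm_left.mul_isBigO hv.norm_left)
  refine IsBigO.of_bound 1 (Eventually.of_forall fun t => ?_)
  simpa using (T t).le_opNorm (v t)

open Asymptotics in
lemma lip_bigO {E H : Type*} [NormedAddCommGroup E] [NormedAddCommGroup H] {l : Filter ℝ}
    {S : Set E} {L : NNReal} {P : E → H} (hP : LipschitzOnWith L P S) {u v : ℝ → E}
    (hu : ∀ᶠ t in l, u t ∈ S) (hv : ∀ᶠ t in l, v t ∈ S) :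
    (fun t => P (u t) - P (v t)) =O[l] (fun t => u t - v t) := by
  refine IsBigO.of_bound L ?_
  filter_upwards [hu, hv] with t h1 h2
  simpa [dist_eq_norm] using hP.dist_le_mul _ h1 _ h2

open Asymptotics in
/-- Let `X, Y` be real Banach spaces, `U ⊆ X` and `V ⊆ Y` open, `g : U → ℝ`
of class `C^{1,1}` on a neighborhood of `x ∈ U`, and `F : U → V` a `C^{1,1}`-diffeomorphism;
set `f = g ∘ F⁻¹`.  Then for every `h ∈ ker g'(x)`:
`D̲²₊f(F(x),(F'(x)h)²) ≤ D̲²₊g(x,h²) − D̲²₊(y ↦ g'(x)(F'(x)⁻¹F(y)))(x,h²)` and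
`D̄²₊f(F(x),(F'(x)h)²) ≥ D̲²₊g(x,h²) − D̲²₊(y ↦ g'(x)(F'(x)⁻¹F(y)))(x,h²)`. -/
theorem stmt_19 {X Y : Type*} [NormedAddCommGroup X] [NormedSpace ℝ X] [CompleteSpace X]
    [NormedAddCommGroup Y] [NormedSpace ℝ Y] [CompleteSpace Y]
    (U : Set X) (V : Set Y) (hUo : IsOpen U) (hVo : IsOpen V)
    (F : X → Y) (G : Y → X) (hF : IsC11DiffeoOn F G U V)
    (g : X → ℝ) (x : X) (hx : x ∈ U)
    (hg : ∃ ε > 0, ball x ε ⊆ U ∧ ContDiffOn ℝ 1 g (ball x ε) ∧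
      ∃ L : NNReal, LipschitzOnWith L (fun y => fderiv ℝ g y) (ball x ε))
    (Finv' : Y →L[ℝ] X)
    (hFinv' : Finv'.comp (fderiv ℝ F x) = ContinuousLinearMap.id ℝ X ∧
      (fderiv ℝ F x).comp Finv' = ContinuousLinearMap.id ℝ Y)
    (h : X) (hker : fderiv ℝ g x h = 0) :
    lowD2p (g ∘ G) (F x) (fderiv ℝ F x h) (fderiv ℝ F x h) ≤
        lowD2p g x h h - lowD2p (fun y => fderiv ℝ g x (Finv' (F y))) x h h ∧
      lowD2p g x h h - lowD2p (fun y => fderiv ℝ g x (Finv' (F y))) x h h ≤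
        upD2p (g ∘ G) (F x) (fderiv ℝ F x h) (fderiv ℝ F x h) := by
  obtain ⟨hFU, hGV, hGF, hFG, hFc, hFl, hGc, hGl⟩ := hF
  obtain ⟨ε, hε, hεU, hgc, L, hgL⟩ := hg
  obtain ⟨δ, hδ, M, hFM⟩ := hFl x hx
  obtain ⟨hBA, hAB⟩ := hFinv'
  have hdF : ∀ z ∈ U, HasFDerivAt F (fderiv ℝ F z) z := fun z hz =>
    ((hFc.contDiffAt (hUo.mem_nhds hz)).differentiableAt (by norm_num)).hasFDerivAt
  have hdG : ∀ z ∈ V, HasFDerivAt G (fderiv ℝ G z) z := fun z hz =>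
    ((hGc.contDiffAt (hVo.mem_nhds hz)).differentiableAt (by norm_num)).hasFDerivAt
  have hdg : ∀ z ∈ ball x ε, HasFDerivAt g (fderiv ℝ g z) z := fun z hz =>
    ((hgc.contDiffAt (isOpen_ball.mem_nhds hz)).differentiableAt (by norm_num)).hasFDerivAt
  have hGFid : ∀ z ∈ U, (fderiv ℝ G (F z)).comp (fderiv ℝ F z) = ContinuousLinearMap.id ℝ X := by
    intro z hz
    have h1 : HasFDerivAt (G ∘ F) ((fderiv ℝ G (F z)).comp (fderiv ℝ F z)) z :=
      (hdG _ (hFU hz)).comp z (hdF z hz)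
    have h2 : HasFDerivAt (G ∘ F) (ContinuousLinearMap.id ℝ X) z :=
      (hasFDerivAt_id z).congr_of_eventuallyEq
        (by filter_upwards [hUo.mem_nhds hz] with w hw using hGF w hw)
    exact h1.unique h2
  have hGB : fderiv ℝ G (F x) = Finv' := by
    have h1 := hGFid x hx
    calc fderiv ℝ G (F x) = (fderiv ℝ G (F x)).comp ((fderiv ℝ F x).comp Finv') := by
          rw [hAB]; rfl
      _ = ((fderiv ℝ G (F x)).comp (fderiv ℝ F x)).comp Finv' := rfl
      _ = Finv' := by rw [h1]; rfl
  have hBAh : ∀ w, Finv' (fderiv ℝ F x w) = w := fun w => by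
    simpa using congrArg (fun T : X →L[ℝ] X => T w) hBA
  set A := fderiv ℝ F x with hA
  set B := Finv' with hB
  set l : Filter ℝ := 𝓝[>] (0:ℝ) with hl
  set y : ℝ → Y := fun t => F x + t • A h with hy
  set u : ℝ → X := fun t => x + t • h with hu
  set z : ℝ → X := fun t => G (y t) with hz
  have hytend : Tendsto y l (𝓝 (F x)) := by
    have : Continuous y := by fun_prop
    have h2 := (this.tendsto 0).mono_left (nhdsWithin_le_nhds (s := Set.Ioi 0))
    simpa [hy] using h2
  have hutend : Tendsto u l (𝓝 x) := by
    have : Continuous u := by fun_prop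
    have h2 := (this.tendsto 0).mono_left (nhdsWithin_le_nhds (s := Set.Ioi 0))
    simpa [hu] using h2
  have hztend : Tendsto z l (𝓝 x) := by
    have h1 := (hdG _ (hFU hx)).continuousAt.tendsto
    rw [hGF x hx] at h1
    exact h1.comp hytend
  have hyV : ∀ᶠ t in l, y t ∈ V := hytend (hVo.mem_nhds (hFU hx))
  have huU : ∀ᶠ t in l, u t ∈ U := hutend (hUo.mem_nhds hx)
  have hzU : ∀ᶠ t in l, z t ∈ U := hztend (hUo.mem_nhds hx)
  have huε : ∀ᶠ t in l, u t ∈ ball x ε := hutend (ball_mem_nhds x hε)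
  have hzε : ∀ᶠ t in l, z t ∈ ball x ε := hztend (ball_mem_nhds x hε)
  have huδ : ∀ᶠ t in l, u t ∈ ball x δ ∩ U :=
    (hutend.eventually (ball_mem_nhds x hδ)).and huU
  have hzδ : ∀ᶠ t in l, z t ∈ ball x δ ∩ U :=
    (hztend.eventually (ball_mem_nhds x hδ)).and hzU
  have hxε : ∀ᶠ _t in l, x ∈ ball x ε := Eventually.of_forall fun _ => mem_ball_self hε
  have hxδ : ∀ᶠ _t in l, x ∈ ball x δ ∩ U := Eventually.of_forall fun _ => ⟨mem_ball_self hδ, hx⟩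
  -- basic asymptotics
  have hux : (fun t => u t - x) =O[l] (fun t : ℝ => t) := by
    refine IsBigO.of_bound ‖h‖ (Eventually.of_forall fun t => ?_)
    simp [hu, norm_smul, mul_comm]
  have hyx : (fun t => y t - F x) =O[l] (fun t : ℝ => t) := by
    refine IsBigO.of_bound ‖A h‖ (Eventually.of_forall fun t => ?_)
    simp [hy, norm_smul, mul_comm]
  have hzu : (fun t => z t - u t) =o[l] (fun t : ℝ => t) := by
    have h1 := ((hdG _ (hFU hx)).isLittleO.comp_tendsto hytend).trans_isBigO hyx
    refine h1.congr_left fun t => ?_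
    simp only [Function.comp, hGF x hx, hGB, hy, hz, hu, add_sub_cancel_left, map_smul, hBAh]
    abel
  have hzx : (fun t => z t - x) =O[l] (fun t : ℝ => t) := by
    simpa using hzu.isBigO.add hux
  have g1 : (fun t => fderiv ℝ g (z t) - fderiv ℝ g (u t)) =o[l] (fun t : ℝ => t) :=
    (lip_bigO hgL hzε huε).trans_isLittleO hzu
  have g2 : (fun t => fderiv ℝ g (z t) - fderiv ℝ g x) =O[l] (fun t : ℝ => t) :=
    (lip_bigO hgL hzε hxε).trans hzx
  have g3 : (fun t => fderiv ℝ g (u t) - fderiv ℝ g x) =O[l] (fun t : ℝ => t) :=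
    (lip_bigO hgL huε hxε).trans hux
  have F1 : (fun t => fderiv ℝ F (u t) - fderiv ℝ F (z t)) =o[l] (fun t : ℝ => t) := by
    simpa using ((lip_bigO hFM hzδ huδ).trans_isLittleO hzu).neg_left
  have F2 : (fun t => A - fderiv ℝ F (z t)) =O[l] (fun t : ℝ => t) := by
    simpa using ((lip_bigO hFM hzδ hxδ).trans hzx).neg_left
  have F3 : (fun t => fderiv ℝ F (u t) - A) =O[l] (fun t : ℝ => t) :=
    (lip_bigO hFM huδ hxδ).trans hux
  have G1t : Tendsto (fun t => fderiv ℝ G (y t)) l (𝓝 B) := by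
    have h1 := ((hGc.contDiffAt (hVo.mem_nhds (hFU hx))).continuousAt_fderiv (by norm_num)).tendsto
    rw [hGB] at h1
    exact h1.comp hytend
  have G0 : (fun t => fderiv ℝ G (y t)) =O[l] (fun _ : ℝ => (1:ℝ)) := G1t.isBigO_one ℝ
  have G1 : (fun t => fderiv ℝ G (y t) - B) =o[l] (fun _ : ℝ => (1:ℝ)) := by
    rw [isLittleO_one_iff]
    simpa using G1t.sub_const B
  have F2h : (fun t => (A - fderiv ℝ F (z t)) h) =O[l] (fun t : ℝ => t) := by
    simpa using clm_bigO _ _ F2 (isBigO_const_const h (one_ne_zero (α := ℝ)) l)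
  have W : (fun t => fderiv ℝ G (y t) ((A - fderiv ℝ F (z t)) h)) =O[l] (fun t : ℝ => t) := by
    simpa using clm_bigO _ _ G0 F2h
  have E1 : (fun t => (fderiv ℝ g (z t) - fderiv ℝ g (u t)) h) =o[l] (fun t : ℝ => t) := by
    simpa using clm_littleO_left _ _ g1 (isBigO_const_const h (one_ne_zero (α := ℝ)) l)
  have tto : (fun t : ℝ => t) =o[l] (fun _ : ℝ => (1:ℝ)) := by
    rw [isLittleO_one_iff]; exact nhdsWithin_le_nhds
  have E2 : (fun t => (fderiv ℝ g (z t) - fderiv ℝ g x)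
      (fderiv ℝ G (y t) ((A - fderiv ℝ F (z t)) h))) =o[l] (fun t : ℝ => t) := by
    simpa using clm_littleO_left _ _ (g2.trans_isLittleO tto) W
  have E3 : (fun t => fderiv ℝ g x ((fderiv ℝ G (y t) - B) ((A - fderiv ℝ F (z t)) h)))
      =o[l] (fun t : ℝ => t) := by
    refine ((fderiv ℝ g x).isBigO_comp _ l).trans_isLittleO ?_
    simpa using clm_littleO_left _ _ G1 F2h
  have E4 : (fun t => fderiv ℝ g x (B ((fderiv ℝ F (u t) - fderiv ℝ F (z t)) h)))
      =o[l] (fun t : ℝ => t) := by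
    refine (((fderiv ℝ g x).comp B).isBigO_comp _ l).trans_isLittleO ?_
    simpa using clm_littleO_left _ _ F1 (isBigO_const_const h (one_ne_zero (α := ℝ)) l)
  have Eall := ((E1.add E2).add E3).add E4
  -- derivative formulas
  have hphi : ∀ w ∈ U, fderiv ℝ (fun y => fderiv ℝ g x (B (F y))) w
      = ((fderiv ℝ g x).comp B).comp (fderiv ℝ F w) := fun w hw =>
    (((fderiv ℝ g x).comp B).hasFDerivAt.comp w (hdF w hw)).fderiv
  have hf : ∀ w ∈ V, G w ∈ ball x ε → fderiv ℝ (g ∘ G) w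
      = (fderiv ℝ g (G w)).comp (fderiv ℝ G w) := fun w hw hw' =>
    ((hdg _ hw').comp w (hdG w hw)).fderiv
  have hpos : ∀ᶠ t in l, 0 < t := self_mem_nhdsWithin
  have quot : ∀ p : ℝ → ℝ, p =O[l] (fun t : ℝ => t) →
      (fun t => p t / t) =O[l] (fun _ : ℝ => (1:ℝ)) := by
    intro p hp
    refine (hp.mul (isBigO_refl (fun t : ℝ => t⁻¹) l)).congr' ?_ ?_
    · exact Eventually.of_forall fun t => (div_eq_mul_inv _ _).symm
    · filter_upwards [hpos] with t ht using mul_inv_cancel₀ ht.ne'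
  unfold lowD2p upD2p
  refine real_liminf_aux _ _ _ (quot _ ?_) (quot _ ?_) ?_
  · simpa using clm_bigO _ _ g3 (isBigO_const_const h (one_ne_zero (α := ℝ)) l)
  · have h1 : (fun t => ((fderiv ℝ g x).comp B) ((fderiv ℝ F (u t) - A) h)) =O[l]
        (fun t : ℝ => t) := by
      refine (((fderiv ℝ g x).comp B).isBigO_comp _ l).trans ?_
      simpa using clm_bigO _ _ F3 (isBigO_const_const h (one_ne_zero (α := ℝ)) l)
    refine h1.congr' ?_ EventuallyEq.rfl
    filter_upwards [huU] with t ht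
    rw [hphi x hx, hphi _ ht]
    simp [hA]
  · refine Eall.tendsto_div_nhds_zero.congr' ?_
    filter_upwards [huU, hyV, hzU, hzε] with t h1 h2 h3 h4
    have hid := congrArg (fun T : X →L[ℝ] X => T h) (hGFid (z t) h3)
    rw [show F (z t) = y t from hFG _ h2] at hid
    simp only [ContinuousLinearMap.comp_apply, ContinuousLinearMap.id_apply] at hid
    have hxe : G (F x) ∈ ball x ε := by rw [hGF x hx]; exact mem_ball_self hε
    rw [hphi x hx, hphi _ h1, hf _ (hFU hx) hxe, hf _ h2 h4, hGB, hGF x hx]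
    rw [← sub_div, ← sub_div]
    congr 1
    simp only [ContinuousLinearMap.comp_apply, _root_.sub_apply, map_sub, hid,
      ← hA, hBAh, hker]
    change _ = fderiv ℝ g (z t) _ - _ - _
    ring
end
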